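/- arXiv:2102.07080 — 6 statements merged into one kernel-verified Lean document; each statement's English description precedes it below -/
import Mathlib

section
/- Let 𝔞 be a cofinite monomial ideal in k[x₁,…,x_d]. For every c ∈ (0,1] the limit ρ_c := lim_{n→∞} m(c+n)/n^{d−1} exists; ρ_c = 0 for all but finitely many c ∈ (0,1]; and the sum over all c ∈ (0,1] of ρ_c equals d · vol(ℝ_{≥0}^d \ P(𝔞)). (Monomial case of Theorem 4.10, using that the Hilbert–Samuel multiplicity of a cofinite monomial ideal equals d! times the volume of the complement of its Newton polyhedron in the first orthant.) -/
open Set Filter Pointwise MeasureTheory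

/-- The map sending a vector of natural number exponents to the corresponding
real vector. -/
noncomputable def expToReal (d : ℕ) (v : Fin d → ℕ) : Fin d → ℝ := fun i => (v i : ℝ)

/-- The Newton polyhedron of a monomial ideal with exponent set `S`:
the convex hull in `ℝ^d` of the exponent vectors. -/
noncomputable def newtonPoly (d : ℕ) (S : Set (Fin d → ℕ)) : Set (Fin d → ℝ) :=
  convexHull ℝ (expToReal d '' S)

/-- The multiplicity `m(c)` of `c > 0` as a (candidate) jumping number of the monomial
ideal with exponent set `S`: the number of `v ∈ ℕ^d` with `v + 𝟏` on the boundary part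
`c•P(𝔞) \ int(c•P(𝔞))` of the dilated Newton polyhedron. -/
noncomputable def multJump (d : ℕ) (S : Set (Fin d → ℕ)) (c : ℝ) : ℕ :=
  Nat.card {v : Fin d → ℕ |
    expToReal d v + 1 ∈ c • newtonPoly d S \ interior (c • newtonPoly d S)}

open scoped Polynomial in
/-- The generating series of `f` is a rational function whose denominator is a power of `1 - X`. -/
def HasRationalSeries (f : ℕ → ℝ) : Prop :=
  ∃ (k : ℕ) (p : ℝ[X]), PowerSeries.mk f * (1 - PowerSeries.X) ^ k = (p : PowerSeries ℝ)

namespace HasRationalSeries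

open Polynomial

theorem zero : HasRationalSeries 0 :=
  ⟨0, 0, by ext n; simp⟩

theorem add {f g : ℕ → ℝ} (hf : HasRationalSeries f) (hg : HasRationalSeries g) :
    HasRationalSeries (f + g) := by
  obtain ⟨k, p, hp⟩ := hf
  obtain ⟨l, q, hq⟩ := hg
  refine ⟨k + l, p * (1 - X) ^ l + q * (1 - X) ^ k, ?_⟩
  have h : PowerSeries.mk (f + g) = PowerSeries.mk f + PowerSeries.mk g := by ext n; simp
  push_cast
  rw [← hp, ← hq, h]
  ring

theorem sum {ι : Type*} (s : Finset ι) {f : ι → ℕ → ℝ}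
    (hf : ∀ i ∈ s, HasRationalSeries (f i)) : HasRationalSeries (∑ i ∈ s, f i) :=
  Finset.sum_induction _ _ (fun _ _ => add) zero hf

theorem of_mul_X_pow {f g : ℕ → ℝ} (e : ℕ) (hf : HasRationalSeries f)
    (h : PowerSeries.mk g = PowerSeries.X ^ e * PowerSeries.mk f) : HasRationalSeries g := by
  obtain ⟨k, p, hp⟩ := hf
  refine ⟨k, X ^ e * p, ?_⟩
  push_cast
  rw [← hp, h]
  ring

theorem of_mul_one_sub {f g : ℕ → ℝ} (hf : HasRationalSeries f)
    (h : PowerSeries.mk g * (1 - PowerSeries.X) = PowerSeries.mk f) : HasRationalSeries g := by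
  obtain ⟨k, p, hp⟩ := hf
  refine ⟨k + 1, p, ?_⟩
  rw [← hp, ← h]
  ring

/-- Partial sums of a sequence with rational generating series have the same property. -/
theorem of_succ {f g : ℕ → ℝ} (hf : HasRationalSeries f) (h0 : g 0 = 0)
    (h : ∀ n, g (n + 1) = g n + f n) : HasRationalSeries g := by
  have hX : HasRationalSeries fun n => g n - if n = 0 then 0 else g (n - 1) := by
    refine hf.of_mul_X_pow 1 ?_
    ext n
    rcases n with _ | n
    · simp [h0]
    · simp [h, PowerSeries.coeff_succ_X_mul]
  refine hX.of_mul_one_sub ?_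
  ext n
  rcases n with _ | n
  · simp [mul_sub]
  · simp [mul_sub, PowerSeries.coeff_succ_mul_X]

/-- A sequence with rational generating series is eventually polynomial. -/
theorem exists_polynomial {f : ℕ → ℝ} (hf : HasRationalSeries f) :
    ∃ q : ℝ[X], ∀ᶠ n : ℕ in atTop, f n = q.eval (n : ℝ) := by
  obtain ⟨k, p, hp⟩ := hf
  refine ⟨hilbertPoly p k, (eventually_gt_atTop p.natDegree).mono fun n hn => ?_⟩
  rw [← coeff_mul_invOneSubPow_eq_hilbertPoly_eval k hn, ← hp, mul_assoc,
    ← PowerSeries.invOneSubPow_inv_eq_one_sub_pow, Units.inv_val, mul_one,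
    PowerSeries.coeff_mk]

end HasRationalSeries

theorem wellFounded_lowerSet {α : Type*} [PartialOrder α] [WellQuasiOrderedLE α] :
    WellFounded ((· < ·) : LowerSet α → LowerSet α → Prop) := by
  rw [RelEmbedding.wellFounded_iff_isEmpty]
  refine ⟨fun D => ?_⟩
  have hlt : ∀ {m n}, m < n → D n < D m := fun h => D.map_rel_iff.2 h
  have hx : ∀ n, ∃ x ∈ D n, x ∉ D (n + 1) := fun n =>
    Set.not_subset.1 (hlt (Nat.lt_succ_self n)).not_ge
  choose x hx hx' using hx
  obtain ⟨m, n, hmn, hle⟩ := wellQuasiOrdered_le x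
  refine hx' m ((D (m + 1)).lower hle ?_)
  rcases (Nat.succ_le_of_lt hmn).eq_or_lt with h | h
  · rw [← Nat.succ_eq_add_one, h]; exact hx n
  · exact (hlt h).le (hx n)

/-- The number of elements of `D` of total degree `n`. -/
noncomputable def degreeCount {r : ℕ} (D : Set (Fin r → ℕ)) (n : ℕ) : ℕ :=
  {a | a ∈ D ∧ ∑ i, a i = n}.ncard

theorem finite_degree_eq (r n : ℕ) : {a : Fin r → ℕ | ∑ i, a i = n}.Finite :=
  (Finset.finite_toSet (Finset.piAntidiag Finset.univ n)).subset fun a ha => by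
    simpa [Finset.mem_piAntidiag] using ha

theorem mk_degreeCount_succ {r : ℕ} (D : Set (Fin (r + 1) → ℕ)) :
    PowerSeries.mk (fun n => (degreeCount D n : ℝ)) =
      PowerSeries.mk (fun n => (degreeCount {b | (Fin.cons 0 b : Fin (r + 1) → ℕ) ∈ D} n : ℝ)) +
        PowerSeries.X *
          PowerSeries.mk (fun n => (degreeCount {a : Fin (r + 1) → ℕ | a + Pi.single 0 1 ∈ D} n : ℝ)) := by
  have hzero : ∀ n, {a | (a ∈ D ∧ ∑ i, a i = n) ∧ a 0 = 0}.ncard =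
      degreeCount {b | (Fin.cons 0 b : Fin (r + 1) → ℕ) ∈ D} n := by
    intro n
    rw [degreeCount, ← Set.ncard_image_of_injective _ 
      (Fin.cons_right_injective (α := fun _ : Fin (r + 1) => ℕ) 0)]
    congr 1
    ext a
    constructor
    · rintro ⟨⟨h1, h2⟩, h3⟩
      refine ⟨Fin.tail a, ⟨?_, ?_⟩, ?_⟩
      · change Fin.cons 0 (Fin.tail a) ∈ D
        rw [← h3, Fin.cons_self_tail]; exact h1
      · rw [Fin.sum_univ_succ, h3, zero_add] at h2
        exact h2
      · change Fin.cons 0 (Fin.tail a) = a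
        rw [← h3, Fin.cons_self_tail]
    · rintro ⟨b, ⟨h1, h2⟩, rfl⟩
      refine ⟨⟨h1, ?_⟩, rfl⟩
      rw [Fin.sum_univ_succ]
      simpa using h2
  have hsucc : ∀ n, {a | (a ∈ D ∧ ∑ i, a i = n + 1) ∧ a 0 ≠ 0}.ncard =
      degreeCount {a : Fin (r + 1) → ℕ | a + Pi.single 0 1 ∈ D} n := by
    intro n
    refine Eq.trans ?_ (Set.ncard_image_of_injective _
      (add_left_injective (Pi.single 0 1 : Fin (r + 1) → ℕ)))
    congr 1
    ext a
    constructor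
    · rintro ⟨⟨h1, h2⟩, h3⟩
      have h : a - Pi.single 0 1 + Pi.single 0 1 = a := by
        ext i
        refine Fin.cases ?_ (fun j => ?_) i
        · simp; omega
        · simp
      refine ⟨a - Pi.single 0 1, ⟨?_, ?_⟩, h⟩
      · change a - Pi.single 0 1 + Pi.single 0 1 ∈ D
        rwa [h]
      · rw [← h] at h2
        simp only [Pi.add_apply, Finset.sum_add_distrib, Finset.sum_pi_single',
          Finset.mem_univ, if_true] at h2
        simpa using h2
    · rintro ⟨b, ⟨h1, h2⟩, rfl⟩
      refine ⟨⟨h1, ?_⟩, by simp⟩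
      simp [Finset.sum_add_distrib, h2]
  have hsplit : ∀ n, degreeCount D n = {a | (a ∈ D ∧ ∑ i, a i = n) ∧ a 0 = 0}.ncard +
      {a | (a ∈ D ∧ ∑ i, a i = n) ∧ a 0 ≠ 0}.ncard := fun n =>
    (Set.ncard_inter_add_ncard_sdiff_eq_ncard {a | a ∈ D ∧ ∑ i, a i = n} {a | a 0 = 0}
      ((finite_degree_eq (r + 1) n).subset fun _ h => h.2)).symm
  ext n
  rcases n with _ | n
  · have h : {a : Fin (r + 1) → ℕ | (a ∈ D ∧ ∑ i, a i = 0) ∧ a 0 ≠ 0} = ∅ := by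
      refine Set.eq_empty_of_forall_notMem fun a ha => ha.2 ?_
      exact (Finset.sum_eq_zero_iff.1 ha.1.2) 0 (Finset.mem_univ _)
    rw [PowerSeries.coeff_mk, hsplit, hzero, h]
    simp
  · simp [hsplit (n + 1), hzero, hsucc, PowerSeries.coeff_succ_X_mul]

/-- The Hilbert function of a lower set of exponent vectors has a rational generating series. -/
theorem hasRationalSeries_degreeCount (r : ℕ) (D : LowerSet (Fin r → ℕ)) :
    HasRationalSeries fun n => (degreeCount (D : Set (Fin r → ℕ)) n : ℝ) := by
  induction r with
  | zero =>
    refine ⟨0, Polynomial.C (degreeCount (D : Set (Fin 0 → ℕ)) 0 : ℝ), ?_⟩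
    ext n
    rcases n with _ | n
    · simp
    · simp [degreeCount]
  | succ r ih =>
    induction D using (wellFounded_lowerSet (α := Fin (r + 1) → ℕ)).induction with
    | _ D IH =>
    let D₀ : LowerSet (Fin r → ℕ) := ⟨{b | (Fin.cons 0 b : Fin (r + 1) → ℕ) ∈ D},
      fun a b hba ha => D.lower (Fin.cons_le_cons.2 ⟨le_rfl, hba⟩) ha⟩
    let D₁ : LowerSet (Fin (r + 1) → ℕ) := ⟨{a | a + Pi.single 0 1 ∈ D},
      fun a b hba ha => D.lower (by gcongr) ha⟩
    have hle : D₁ ≤ D := fun a ha => D.lower le_self_add ha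
    have hrec := mk_degreeCount_succ (D : Set (Fin (r + 1) → ℕ))
    rcases hle.eq_or_lt with heq | hlt
    · refine (ih D₀).of_mul_one_sub ?_
      have h1 : {a : Fin (r + 1) → ℕ | a + Pi.single 0 1 ∈ (D : Set (Fin (r + 1) → ℕ))} = D :=
        congrArg SetLike.coe heq
      rw [h1] at hrec
      rw [mul_sub, mul_one, mul_comm _ PowerSeries.X, sub_eq_iff_eq_add]
      exact hrec
    · obtain ⟨k, p, hp⟩ := (ih D₀).add ((IH D₁ hlt).of_mul_X_pow (g := fun n =>
        PowerSeries.coeff n (PowerSeries.X * PowerSeries.mk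
          fun n => (degreeCount (D₁ : Set (Fin (r + 1) → ℕ)) n : ℝ))) 1 (by ext n; simp))
      refine ⟨k, p, ?_⟩
      rw [← hp, hrec]
      congr 1
      ext n
      simp only [map_add, PowerSeries.coeff_mk, Pi.add_apply]
      rfl

theorem Polynomial.tendsto_eval_natCast_div_pow (q : Polynomial ℝ) {k : ℕ} (h : q.natDegree ≤ k) :
    Tendsto (fun n : ℕ => q.eval (n : ℝ) / (n : ℝ) ^ k) atTop (nhds (q.coeff k)) := by
  suffices H : Tendsto (fun x : ℝ => q.eval x / (X ^ k : Polynomial ℝ).eval x) atTop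
      (nhds (q.coeff k)) by
    simpa [Function.comp_def] using H.comp tendsto_natCast_atTop_atTop
  rcases h.eq_or_lt with rfl | h
  · by_cases hq : q = 0
    · simp [hq]
    simpa using Polynomial.div_tendsto_atTop_leadingCoeff_div_of_degree_eq q (X ^ q.natDegree)
      (by rw [Polynomial.degree_X_pow, Polynomial.degree_eq_natDegree hq])
  · rw [Polynomial.coeff_eq_zero_of_natDegree_lt h]
    exact Polynomial.div_tendsto_atTop_zero_of_degree_lt q (X ^ k) (by
      rw [Polynomial.degree_X_pow]
      exact (Polynomial.degree_le_natDegree).trans_lt (by exact_mod_cast h))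

theorem Polynomial.natDegree_le_of_eventually_abs_div_le (q : Polynomial ℝ) {k : ℕ} (C : ℝ)
    (h : ∀ᶠ n : ℕ in atTop, |q.eval (n : ℝ) / (n : ℝ) ^ k| ≤ C) : q.natDegree ≤ k := by
  by_contra! hk
  have H := (Polynomial.abs_div_tendsto_atTop_atTop_of_degree_gt q (X ^ k) (by
      rw [Polynomial.degree_X_pow]
      exact lt_of_not_ge fun h => hk.not_ge (Polynomial.natDegree_le_iff_degree_le.2 h))
    (pow_ne_zero _ Polynomial.X_ne_zero)).comp (tendsto_natCast_atTop_atTop (R := ℝ))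
  obtain ⟨n, hn, hn'⟩ := (h.and (H.eventually_gt_atTop C)).exists
  simp only [Function.comp_apply, Polynomial.eval_pow, Polynomial.eval_X] at hn'
  exact hn.not_gt hn'

theorem Filter.Tendsto.eventually_abs_le {f : ℕ → ℝ} {V : ℝ} (h : Tendsto f atTop (nhds V)) :
    ∀ᶠ n in atTop, |f n| ≤ |V| + 1 :=
  (h.abs.eventually_lt_const (lt_add_one _)).mono fun _ => le_of_lt

theorem HasRationalSeries.tendsto_of_le {f g : ℕ → ℝ} (hf : HasRationalSeries f) {k : ℕ} {V : ℝ}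
    (h0 : ∀ n, 0 ≤ f n) (hle : ∀ n, f n ≤ g n)
    (hg : Tendsto (fun n : ℕ => g n / (n : ℝ) ^ k) atTop (nhds V)) :
    ∃ ρ, Tendsto (fun n : ℕ => f n / (n : ℝ) ^ k) atTop (nhds ρ) := by
  obtain ⟨q, hq⟩ := hf.exists_polynomial
  have hdeg : q.natDegree ≤ k := by
    refine q.natDegree_le_of_eventually_abs_div_le (|V| + 1) ?_
    filter_upwards [hq, hg.eventually_abs_le] with n hn hn'
    rw [← hn, abs_of_nonneg (div_nonneg (h0 n) (by positivity))]
    refine le_trans ?_ ((le_abs_self _).trans hn')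
    gcongr
    exact hle n
  refine ⟨q.coeff k, (q.tendsto_eval_natCast_div_pow hdeg).congr' ?_⟩
  filter_upwards [hq] with n hn
  rw [hn]

/-- For sequences with rational generating series, the growth rate of the partial sums determines
the growth rate of the terms. -/
theorem HasRationalSeries.tendsto_of_tendsto_sum {a N : ℕ → ℝ} (ha : HasRationalSeries a)
    (h0 : N 0 = 0) (hN : ∀ n, N (n + 1) = N n + a n) {k : ℕ} {V : ℝ}
    (hV : Tendsto (fun n : ℕ => N n / (n : ℝ) ^ (k + 1)) atTop (nhds V)) :
    Tendsto (fun n : ℕ => a n / (n : ℝ) ^ k) atTop (nhds ((k + 1) * V)) := by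
  obtain ⟨Q, hQ⟩ := (ha.of_succ h0 hN).exists_polynomial
  have hdeg : Q.natDegree ≤ k + 1 := by
    refine Q.natDegree_le_of_eventually_abs_div_le (|V| + 1) ?_
    filter_upwards [hQ, hV.eventually_abs_le] with n hn hn'
    rwa [← hn]
  have hcoeff : Q.coeff (k + 1) = V :=
    tendsto_nhds_unique ((Q.tendsto_eval_natCast_div_pow hdeg).congr' (by
      filter_upwards [hQ] with n hn
      rw [hn])) hV
  set q := Polynomial.taylor 1 Q - Q with hq
  have hqk : ∀ j, k ≤ j → q.coeff j = if j = k then (k + 1) * V else 0 := by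
    intro j hj
    rw [hq, Polynomial.coeff_sub, Polynomial.taylor_coeff, Polynomial.hasseDeriv_apply,
      Polynomial.sum_over_range' _ _ (k + 2) (by omega)]
    · rw [Polynomial.eval_finsetSum]
      rcases hj.eq_or_lt with rfl | hj
      · rw [Finset.sum_range_succ, Finset.sum_range_succ, Finset.sum_eq_zero]
        · simp [hcoeff]
        · intro i hi
          simp [Nat.choose_eq_zero_of_lt (Finset.mem_range.1 hi)]
      · rw [if_neg hj.ne']
        rcases (Nat.succ_le_of_lt hj).eq_or_lt with rfl | hj'
        · rw [Finset.sum_range_succ, Finset.sum_eq_zero]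
          · simp
          · intro i hi
            simp [Nat.choose_eq_zero_of_lt (Finset.mem_range.1 hi)]
        · rw [Finset.sum_eq_zero, Polynomial.coeff_eq_zero_of_natDegree_lt (by omega), sub_zero]
          intro i hi
          rw [Finset.mem_range] at hi
          simp [Nat.choose_eq_zero_of_lt (show i < j by omega)]
    · simp
  have hqdeg : q.natDegree ≤ k := by
    refine Polynomial.natDegree_le_iff_coeff_eq_zero.2 fun j hj => ?_
    rw [hqk j hj.le, if_neg hj.ne']
  have hlim := q.tendsto_eval_natCast_div_pow hqdeg
  rw [hqk k le_rfl, if_pos rfl] at hlim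
  refine hlim.congr' ?_
  filter_upwards [hQ, (tendsto_add_atTop_nat 1).eventually hQ] with n hn hn'
  rw [hq, Polynomial.eval_sub, Polynomial.taylor_eval, ← hn]
  push_cast at hn'
  rw [← hn', hN, add_sub_cancel_left]

/-- Let `ψ` grow at least by `∑ i, a i` under translation by `∑ i, a i • w i`, and suppose that
every element is such a translate of one of finitely many elements `p j`, with exact growth.
Then the level sets of `ψ` along `c + ℕ` have a rational generating series. -/
theorem hasRationalSeries_card_level {M : Type*} [AddCommMonoid M] {r N : ℕ} (ψ : M → ℝ)
    (w : Fin r → M) (p : Fin N → M) (hψ : ∀ j, 0 < ψ (p j))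
    (hsup : ∀ v (a : Fin r → ℕ), ψ v + ∑ i, (a i : ℝ) ≤ ψ (v + ∑ i, a i • w i))
    (hgen : ∀ v, ∃ j, ∃ a : Fin r → ℕ,
      p j + ∑ i, a i • w i = v ∧ ψ v = ψ (p j) + ∑ i, (a i : ℝ))
    {c : ℝ} (hc : c ≤ 1) :
    HasRationalSeries fun n => (Nat.card {v | ψ v = c + n} : ℝ) := by
  let pt : (Fin r → ℕ) → Fin N → M := fun a j => p j + ∑ i, a i • w i
  let good : (Fin r → ℕ) → Fin N → Prop := fun a j => ψ (pt a j) = ψ (p j) + ∑ i, (a i : ℝ)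
  let key : (Fin r → ℕ) → Fin N → Lex (Lex (Fin r → ℕ) × Fin N) := fun a j => toLex (toLex a, j)
  have hpt : ∀ a b j, pt (a + b) j = pt a j + ∑ i, b i • w i := fun a b j => by
    simp only [pt, Pi.add_apply, add_smul, Finset.sum_add_distrib, add_assoc]
  have hkey : ∀ a b e i j, key (a + e) i ≤ key (b + e) j → key a i ≤ key b j := by
    intro a b e i j h
    simp only [key, Prod.Lex.toLex_le_toLex] at h ⊢
    rcases h with h | ⟨h, h'⟩
    · exact Or.inl (lt_of_add_lt_add_right (a := toLex e) h)
    · exact Or.inr ⟨add_right_cancel (b := toLex e) h, h'⟩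
  let D : Fin N → LowerSet (Fin r → ℕ) := fun j =>
    { carrier := {a | good a j ∧ ∀ b i, good b i → pt b i = pt a j → key a j ≤ key b i}
      lower' := by
        rintro a b hba ⟨hg, hmin⟩
        obtain ⟨e, rfl⟩ := exists_add_of_le hba
        have hgb : good b j := by
          have h1 := hsup (p j) b
          have h2 := hsup (pt b j) e
          rw [← hpt, hg] at h2
          simp only [Pi.add_apply, Nat.cast_add, Finset.sum_add_distrib] at h2
          exact le_antisymm (by linarith) h1
        refine ⟨hgb, fun b' i hg' heq => hkey _ _ e _ _ (hmin _ _ ?_ ?_)⟩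
        · have h : pt (b' + e) i = pt (b + e) j := by rw [hpt, hpt, heq]
          change ψ (pt (b' + e) i) = _
          rw [h, hg]
          have h1 : ψ (p i) + ∑ i, (b' i : ℝ) = ψ (p j) + ∑ i, (b i : ℝ) := by
            rw [← hg', ← hgb, heq]
          simp only [Pi.add_apply, Nat.cast_add, Finset.sum_add_distrib]
          linarith
        · rw [hpt, hpt, heq] }
  let F : Fin N → ℕ → Set (Fin r → ℕ) := fun j n =>
    {a | a ∈ D j ∧ ψ (p j) + ∑ i, (a i : ℝ) = c + n}
  have hF : ∀ j, (∃ e : ℕ, ∀ n, F j n = {a | a ∈ D j ∧ ∑ i, a i + e = n}) ∨ ∀ n, F j n = ∅ := by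
    intro j
    by_cases hne : ∃ n, (F j n).Nonempty
    · left
      obtain ⟨n, a, -, ha⟩ := hne
      have hle : ∑ i, a i ≤ n := by
        by_contra! hlt
        have : (n : ℝ) + 1 ≤ ∑ i, (a i : ℝ) := by exact_mod_cast hlt
        linarith [hψ j]
      obtain ⟨e, rfl⟩ := Nat.exists_eq_add_of_le hle
      refine ⟨e, fun m => Set.ext fun b => and_congr_right fun _ => ?_⟩
      have he : ψ (p j) = c + e := by
        push_cast at ha
        linarith
      rw [he, ← Nat.cast_inj (R := ℝ)]
      push_cast
      constructor <;> intro h <;> linarith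
    · right
      intro n
      by_contra h
      exact hne ⟨n, Set.nonempty_iff_ne_empty.2 h⟩
  have hfin : ∀ j n, (F j n).Finite := by
    intro j n
    rcases hF j with ⟨e, he⟩ | h
    · rw [he]
      refine (finite_degree_eq r (n - e)).subset fun a ha => ?_
      have := ha.2
      change ∑ i, a i = n - e
      omega
    · simp [h]
  have hcard : ∀ n : ℕ, Nat.card {v | ψ v = c + n} = ∑ j, (F j n).ncard := by
    intro n
    have : ∀ j, Finite (F j n) := fun j => hfin j n
    simp_rw [← Nat.card_coe_set_eq]
    rw [← Nat.card_sigma]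
    symm
    refine Nat.card_eq_of_bijective
      (fun x : Σ j, F j n => (⟨pt x.2.1 x.1, x.2.2.1.1.trans x.2.2.2⟩ : {v | ψ v = c + n})) ⟨?_, ?_⟩
    · rintro ⟨i, a, ha⟩ ⟨j, b, hb⟩ h
      have h' : pt a i = pt b j := congrArg Subtype.val h
      have hk : key a i = key b j :=
        le_antisymm (ha.1.2 _ _ hb.1.1 h'.symm) (hb.1.2 _ _ ha.1.1 h')
      simp only [key, EmbeddingLike.apply_eq_iff_eq, Prod.mk.injEq] at hk
      obtain ⟨rfl, rfl⟩ := hk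
      rfl
    · rintro ⟨v, hv⟩
      let T : Set (Lex (Lex (Fin r → ℕ) × Fin N)) :=
        {x | ∃ a j, x = key a j ∧ good a j ∧ pt a j = v}
      have hT : T.Nonempty := by
        obtain ⟨j, a, h1, h2⟩ := hgen v
        refine ⟨key a j, a, j, rfl, ?_, h1⟩
        change ψ (pt a j) = _
        rw [show pt a j = v from h1, h2]
      have hwf : WellFounded ((· < ·) : Lex (Lex (Fin r → ℕ) × Fin N) → _ → Prop) := wellFounded_lt
      obtain ⟨a, j, hx, hg, hv'⟩ := hwf.min_mem T hT
      refine ⟨⟨j, a, ⟨hg, fun b i hb hbi => ?_⟩, ?_⟩, Subtype.ext hv'⟩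
      · rw [← hx]
        exact hwf.min_le (⟨b, i, rfl, hb, hbi.trans hv'⟩ : key b i ∈ T)
      · rw [← hg, hv']
        exact hv
  have hsum : (fun n : ℕ => (Nat.card {v | ψ v = c + n} : ℝ)) =
      ∑ j, fun n => ((F j n).ncard : ℝ) := by
    ext n
    rw [hcard]
    simp
  rw [hsum]
  refine HasRationalSeries.sum _ fun j _ => ?_
  rcases hF j with ⟨e, he⟩ | h
  · refine (hasRationalSeries_degreeCount r (D j)).of_mul_X_pow e ?_
    ext n
    rw [PowerSeries.coeff_mk, PowerSeries.coeff_X_pow_mul', he]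
    split_ifs with hn
    · rw [PowerSeries.coeff_mk, degreeCount]
      congr! 3
      ext a
      refine and_congr_right fun _ => ?_
      omega
    · have : {a | a ∈ D j ∧ ∑ i, a i + e = n} = ∅ :=
        Set.eq_empty_of_forall_notMem fun a ha => hn (by have := ha.2; omega)
      simp [this]
  · simp only [h, Set.ncard_empty, Nat.cast_zero]
    exact HasRationalSeries.zero

section NewtonPolyhedron

variable {d r : ℕ}

theorem add_mem_newtonPoly {S : Set (Fin d → ℕ)} (hS : ∀ v ∈ S, ∀ w : Fin d → ℕ, v + w ∈ S)
    {x y : Fin d → ℝ} (hx : x ∈ newtonPoly d S) (hy : 0 ≤ y) : x + y ∈ newtonPoly d S := by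
  have hconv : Convex ℝ {z | z + y ∈ newtonPoly d S} :=
    (convex_convexHull ℝ _).translate_preimage_left y
  refine convexHull_min ?_ hconv hx
  rintro _ ⟨s, hs, rfl⟩
  obtain ⟨K, hK⟩ : ∃ K : Fin d → ℕ, ∀ i, y i ≤ K i :=
    ⟨fun i => ⌈y i⌉₊, fun i => Nat.le_ceil _⟩
  have hsub : (Set.univ.pi fun i => ({(s i : ℝ), (s i : ℝ) + K i} : Set ℝ)) ⊆ expToReal d '' S := by
    intro z hz
    refine ⟨s + fun i => if z i = s i then 0 else K i, hS s hs _, ?_⟩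
    ext i
    simp only [expToReal, Pi.add_apply]
    split_ifs with h
    · simp [h]
    · push_cast
      exact ((hz i trivial).resolve_left h).symm
  refine convexHull_mono hsub (mem_convexHull_pi fun i _ => ?_)
  rw [convexHull_pair, segment_eq_Icc (by simp)]
  simp only [Pi.add_apply, expToReal, Set.mem_Icc, le_add_iff_nonneg_right, add_le_add_iff_left]
  exact ⟨hy i, hK i⟩

/-- Nonnegative combinations of the vectors `w i` bounded above by `x`. -/
def feasible (w : Fin r → Fin d → ℕ) (x : Fin d → ℝ) : Set (Fin r → ℝ) :=
  {b | 0 ≤ b ∧ ∀ k, ∑ i, b i * w i k ≤ x k}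

/-- The largest total weight of a nonnegative combination of the `w i` bounded above by `x`.
If the `w i` generate the monomial ideal, this is the largest `c` with `x ∈ c • P`. -/
noncomputable def level (w : Fin r → Fin d → ℕ) (x : Fin d → ℝ) : ℝ :=
  sSup ((fun b => ∑ i, b i) '' feasible w x)

variable {w : Fin r → Fin d → ℕ} {x : Fin d → ℝ}

theorem isCompact_feasible (hw : ∀ i, w i ≠ 0) (x : Fin d → ℝ) : IsCompact (feasible w x) := by
  have hk : ∀ i, ∃ k, w i k ≠ 0 := fun i => Function.ne_iff.1 (hw i)
  choose k hk using hk
  refine (isCompact_Icc (a := (0 : Fin r → ℝ)) (b := fun i => x (k i))).of_isClosed_subset ?_ ?_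
  · have h : feasible w x = Set.Ici 0 ∩ ⋂ k, {b | ∑ i, b i * (w i k : ℝ) ≤ x k} := by
      ext b
      simp [feasible]
    rw [h]
    refine isClosed_Ici.inter (isClosed_iInter fun k => isClosed_le ?_ continuous_const)
    fun_prop
  · rintro b ⟨h0, hb⟩
    refine ⟨h0, fun i => ?_⟩
    have h1 : (1 : ℝ) ≤ w i (k i) := by exact_mod_cast Nat.one_le_iff_ne_zero.2 (hk i)
    calc b i ≤ b i * w i (k i) := le_mul_of_one_le_right (h0 i) h1
      _ ≤ ∑ j, b j * w j (k i) := Finset.single_le_sum (f := fun j => b j * (w j (k i) : ℝ))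
          (fun j _ => mul_nonneg (h0 j) (Nat.cast_nonneg _)) (Finset.mem_univ i)
      _ ≤ x (k i) := hb _

theorem isGreatest_level (hw : ∀ i, w i ≠ 0) (hx : 0 ≤ x) :
    IsGreatest ((fun b => ∑ i, b i) '' feasible w x) (level w x) := by
  refine ((isCompact_feasible hw x).image (by fun_prop)).isGreatest_sSup
    (Set.Nonempty.image _ ⟨0, le_rfl, fun k => ?_⟩)
  simpa using hx k

theorem exists_feasible_sum_eq_iff (hw : ∀ i, w i ≠ 0) (hx : 0 ≤ x) {c : ℝ} (hc : 0 < c) :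
    (∃ b ∈ feasible w x, ∑ i, b i = c) ↔ c ≤ level w x := by
  constructor
  · rintro ⟨b, hb, rfl⟩
    exact (isGreatest_level hw hx).2 ⟨b, hb, rfl⟩
  · intro hle
    obtain ⟨b, hb, hsum⟩ := (isGreatest_level hw hx).1
    have hpos : 0 < level w x := hc.trans_le hle
    have ht0 : 0 ≤ c / level w x := by positivity
    have ht1 : c / level w x ≤ 1 := (div_le_one hpos).2 hle
    refine ⟨(c / level w x) • b, ⟨smul_nonneg ht0 hb.1, fun k => ?_⟩, ?_⟩
    · have hnn : 0 ≤ ∑ i, b i * (w i k : ℝ) :=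
        Finset.sum_nonneg fun i _ => mul_nonneg (hb.1 i) (Nat.cast_nonneg _)
      simp only [Pi.smul_apply, smul_eq_mul, mul_assoc, ← Finset.mul_sum]
      exact (mul_le_of_le_one_left hnn ht1).trans (hb.2 k)
    · simp only [Pi.smul_apply, smul_eq_mul, ← Finset.mul_sum]
      rw [show ∑ i, b i = level w x from hsum, div_mul_cancel₀ _ hpos.ne']

theorem level_add_sum_le (hw : ∀ i, w i ≠ 0) (hx : 0 ≤ x) (a : Fin r → ℕ) :
    level w x + ∑ i, (a i : ℝ) ≤ level w (x + expToReal d (∑ i, a i • w i)) := by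
  obtain ⟨b, hb, hsum⟩ := (isGreatest_level hw hx).1
  have hx' : 0 ≤ x + expToReal d (∑ i, a i • w i) :=
    add_nonneg hx fun k => Nat.cast_nonneg _
  refine (isGreatest_level hw hx').2 ⟨fun i => b i + a i, ⟨fun i => ?_, fun k => ?_⟩, ?_⟩
  · exact add_nonneg (hb.1 i) (Nat.cast_nonneg _)
  · simp only [add_mul, Finset.sum_add_distrib, Pi.add_apply, expToReal, Finset.sum_apply,
      Pi.smul_apply, smul_eq_mul, Nat.cast_sum, Nat.cast_mul]
    gcongr
    exact hb.2 k
  · simp only [Finset.sum_add_distrib]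
    rw [show ∑ i, b i = level w x from hsum]

/-- The vectors `w i` belong to the up-closed set `S` and every element of `S` dominates one of
them. -/
structure IsGeneratedBy (S : Set (Fin d → ℕ)) (w : Fin r → Fin d → ℕ) : Prop where
  add_mem : ∀ v ∈ S, ∀ u : Fin d → ℕ, v + u ∈ S
  mem : ∀ i, w i ∈ S
  exists_le : ∀ s ∈ S, ∃ i, w i ≤ s

theorem exists_isGeneratedBy {S : Set (Fin d → ℕ)} (hS : ∀ v ∈ S, ∀ w : Fin d → ℕ, v + w ∈ S) :
    ∃ (r : ℕ) (w : Fin r → Fin d → ℕ), IsGeneratedBy S w := by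
  have hfin : {s | Minimal (· ∈ S) s}.Finite :=
    WellQuasiOrderedLE.finite_of_isAntichain (setOfPred_minimal_antichain _)
  obtain ⟨r, w, -, hw⟩ := hfin.fin_param
  refine ⟨r, w, hS, fun i => ?_, fun s hs => ?_⟩
  · have h : w i ∈ {s | Minimal (· ∈ S) s} := hw ▸ Set.mem_range_self i
    exact h.prop
  · obtain ⟨m, hm, hmin⟩ := exists_minimal_le_of_wellFoundedLT (· ∈ S) s hs
    obtain ⟨i, rfl⟩ : m ∈ Set.range w := hw ▸ hmin
    exact ⟨i, hm⟩

variable {S : Set (Fin d → ℕ)}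

theorem mem_smul_newtonPoly_iff (h : IsGeneratedBy S w) {c : ℝ} (hc : 0 < c) :
    x ∈ c • newtonPoly d S ↔ ∃ b ∈ feasible w x, ∑ i, b i = c := by
  constructor
  · rintro ⟨y, hy, rfl⟩
    suffices hb : ∃ b ∈ feasible w y, ∑ i, b i = 1 by
      obtain ⟨b, hb, hsum⟩ := hb
      refine ⟨c • b, ⟨smul_nonneg hc.le hb.1, fun k => ?_⟩, ?_⟩
      · simp only [Pi.smul_apply, smul_eq_mul, mul_assoc, ← Finset.mul_sum]
        exact mul_le_mul_of_nonneg_left (hb.2 k) hc.le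
      · simp [← Finset.mul_sum, hsum]
    have hconv : Convex ℝ {y | ∃ b ∈ feasible w y, ∑ i, b i = 1} := by
      rintro y ⟨b, hb, hbs⟩ z ⟨b', hb', hbs'⟩ s t hs ht hst
      refine ⟨s • b + t • b', ⟨add_nonneg (smul_nonneg hs hb.1) (smul_nonneg ht hb'.1),
        fun k => ?_⟩, ?_⟩
      · simp only [Pi.add_apply, Pi.smul_apply, smul_eq_mul, add_mul, mul_assoc,
          Finset.sum_add_distrib, ← Finset.mul_sum]
        exact add_le_add (mul_le_mul_of_nonneg_left (hb.2 k) hs)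
          (mul_le_mul_of_nonneg_left (hb'.2 k) ht)
      · simp [Finset.sum_add_distrib, ← Finset.mul_sum, hbs, hbs', hst]
    refine convexHull_min ?_ hconv hy
    rintro _ ⟨s, hs, rfl⟩
    obtain ⟨i, hi⟩ := h.exists_le s hs
    refine ⟨Pi.single i 1, ⟨Pi.single_nonneg.2 zero_le_one, fun k => ?_⟩, by simp⟩
    simpa [Pi.single_apply, expToReal] using hi k
  · rintro ⟨b, hb, hsum⟩
    have hcomb : ∑ i, (b i / c) • expToReal d (w i) ∈ newtonPoly d S :=
      (convex_convexHull ℝ _).sum_mem (fun i _ => div_nonneg (hb.1 i) hc.le)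
        (by rw [← Finset.sum_div, hsum, div_self hc.ne'])
        fun i _ => subset_convexHull ℝ _ ⟨w i, h.mem i, rfl⟩
    have hcoord : ∀ k, c * (∑ i, (b i / c) • expToReal d (w i)) k = ∑ i, b i * w i k := by
      intro k
      simp only [Finset.sum_apply, Pi.smul_apply, smul_eq_mul, expToReal, Finset.mul_sum]
      refine Finset.sum_congr rfl fun i _ => ?_
      field_simp
    rw [Set.mem_smul_set_iff_inv_smul_mem₀ hc.ne']
    have hy : 0 ≤ c⁻¹ • x - ∑ i, (b i / c) • expToReal d (w i) := by
      intro k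
      have := hb.2 k
      rw [← hcoord] at this
      rw [Pi.zero_apply, Pi.sub_apply, sub_nonneg, Pi.smul_apply, smul_eq_mul,
        ← div_eq_inv_mul, le_div_iff₀' hc]
      exact this
    simpa using add_mem_newtonPoly h.add_mem hcomb hy

theorem mem_interior_smul_newtonPoly_iff (h : IsGeneratedBy S w) (hx : ∀ k, 0 < x k) {c : ℝ}
    (hc : 0 < c) :
    x ∈ interior (c • newtonPoly d S) ↔ ∃ c' > c, ∃ b ∈ feasible w x, ∑ i, b i = c' := by
  constructor
  · intro hint
    have hcont : Tendsto (fun s : ℝ => s • x) (nhdsWithin 1 (Set.Iio 1)) (nhds x) := by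
      have : Continuous fun s : ℝ => s • x := by fun_prop
      simpa using (this.tendsto 1).mono_left nhdsWithin_le_nhds
    obtain ⟨s, hs, hs0, hs1⟩ := ((hcont.eventually (isOpen_interior.mem_nhds hint)).and
      (Ioo_mem_nhdsLT (zero_lt_one' ℝ))).exists
    refine ⟨c / s, (lt_div_iff₀ hs0).2 (by nlinarith), ?_⟩
    rw [← mem_smul_newtonPoly_iff h (by positivity),
      Set.mem_smul_set_iff_inv_smul_mem₀ (by positivity)]
    have := interior_subset hs
    rw [Set.mem_smul_set_iff_inv_smul_mem₀ hc.ne', smul_smul] at this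
    rwa [inv_div, div_eq_inv_mul]
  · rintro ⟨c', hc', b, hb, hsum⟩
    have hc'0 : 0 < c' := hc.trans hc'
    have ht : c / c' < 1 := (div_lt_one hc'0).2 hc'
    refine mem_interior.2 ⟨{y | ∀ k, c / c' * x k < y k}, fun y hy => ?_, ?_, fun k => ?_⟩
    · rw [mem_smul_newtonPoly_iff h hc]
      refine ⟨(c / c') • b, ⟨smul_nonneg (by positivity) hb.1, fun k => ?_⟩, ?_⟩
      · simp only [Pi.smul_apply, smul_eq_mul, mul_assoc, ← Finset.mul_sum]
        exact (mul_le_mul_of_nonneg_left (hb.2 k) (by positivity)).trans (hy k).le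
      · simp only [Pi.smul_apply, smul_eq_mul, ← Finset.mul_sum]
        rw [hsum, div_mul_cancel₀ _ hc'0.ne']
    · rw [Set.ofPred_forall]
      exact isOpen_iInter_of_finite fun k => isOpen_lt continuous_const (continuous_apply k)
    · exact mul_lt_of_lt_one_left (hx k) ht

theorem mem_smul_newtonPoly_iff_le_level (h : IsGeneratedBy S w) (hw : ∀ i, w i ≠ 0)
    (hx : 0 ≤ x) {c : ℝ} (hc : 0 < c) : x ∈ c • newtonPoly d S ↔ c ≤ level w x := by
  rw [mem_smul_newtonPoly_iff h hc, exists_feasible_sum_eq_iff hw hx hc]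

theorem mem_interior_smul_newtonPoly_iff_lt_level (h : IsGeneratedBy S w) (hw : ∀ i, w i ≠ 0)
    (hx : ∀ k, 0 < x k) {c : ℝ} (hc : 0 < c) :
    x ∈ interior (c • newtonPoly d S) ↔ c < level w x := by
  rw [mem_interior_smul_newtonPoly_iff h hx hc]
  constructor
  · rintro ⟨c', hc', hb⟩
    exact hc'.trans_le
      ((exists_feasible_sum_eq_iff hw (fun k => (hx k).le) (hc.trans hc')).1 hb)
  · intro hlt
    exact ⟨_, hlt, (exists_feasible_sum_eq_iff hw (fun k => (hx k).le) (hc.trans hlt)).2 le_rfl⟩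

theorem expToReal_add_one_pos (v : Fin d → ℕ) (k : Fin d) : 0 < (expToReal d v + 1) k := by
  simp only [expToReal, Pi.add_apply, Pi.one_apply]
  positivity

theorem multJump_eq_card_level (h : IsGeneratedBy S w) (hw : ∀ i, w i ≠ 0) {c : ℝ} (hc : 0 < c) :
    multJump d S c = Nat.card {v | level w (expToReal d v + 1) = c} := by
  have hset : {v | expToReal d v + 1 ∈ c • newtonPoly d S \ interior (c • newtonPoly d S)} =
      {v | level w (expToReal d v + 1) = c} := by
    ext v
    have hpos := expToReal_add_one_pos v
    change _ ∧ ¬ _ ↔ _ = _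
    rw [mem_smul_newtonPoly_iff_le_level h hw (fun k => (hpos k).le) hc,
      mem_interior_smul_newtonPoly_iff_lt_level h hw hpos hc, not_lt, and_comm, le_antisymm_iff]
  rw [multJump, hset]

theorem exists_coord_le_mul_level (h : IsGeneratedBy S w) (hw : ∀ i, w i ≠ 0)
    (hcof : (Sᶜ : Set (Fin d → ℕ)).Finite) :
    ∃ K : Fin d → ℕ, ∀ x : Fin d → ℝ, 0 ≤ x → ∀ k, x k ≤ K k * level w x := by
  suffices H : ∀ k, ∃ K : ℕ, ∀ x : Fin d → ℝ, 0 ≤ x → x k ≤ K * level w x by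
    choose K hK using H
    exact ⟨K, fun x hx k => hK k x hx⟩
  intro k
  obtain ⟨K, hK, hK0⟩ : ∃ K : ℕ, Pi.single k K ∈ S ∧ 0 < K := by
    have hfin : {n : ℕ | Pi.single k n ∈ Sᶜ}.Finite :=
      hcof.preimage (Pi.single_injective (M := fun _ : Fin d => ℕ) k).injOn
    obtain ⟨K, hK⟩ := (hfin.union (Set.finite_singleton 0)).exists_notMem
    refine ⟨K, ?_, ?_⟩
    · by_contra hn
      exact hK (Or.inl hn)
    · by_contra hn
      exact hK (Or.inr (by simpa using hn))
  obtain ⟨i, hi⟩ := h.exists_le _ hK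
  refine ⟨K, fun x hx => ?_⟩
  have hK0' : (0 : ℝ) < K := by exact_mod_cast hK0
  rw [← div_le_iff₀' hK0']
  refine (isGreatest_level hw hx).2
    ⟨Pi.single i (x k / K), ⟨Pi.single_nonneg.2 (div_nonneg (hx k) hK0'.le), fun j => ?_⟩, by simp⟩
  have hij := hi j
  simp only [Pi.single_apply, ite_mul, zero_mul, Finset.sum_ite_eq', Finset.mem_univ, if_true]
  by_cases hjk : j = k
  · subst hjk
    have : (w i j : ℝ) ≤ K := by simpa using hij
    rw [div_mul_eq_mul_div, div_le_iff₀ hK0']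
    exact mul_le_mul_of_nonneg_left this (hx j)
  · have : w i j = 0 := by simpa [hjk] using hij
    simpa [this] using hx j

/-- Every exponent vector is a translate, with exact growth of the level, of one whose level is
at most the number of generators. -/
theorem exists_level_le_add_sum_smul (hw : ∀ i, w i ≠ 0) (v : Fin d → ℕ) :
    ∃ u : Fin d → ℕ, level w (expToReal d u + 1) ≤ r ∧ ∃ a : Fin r → ℕ, u + ∑ i, a i • w i = v ∧
      level w (expToReal d v + 1) = level w (expToReal d u + 1) + ∑ i, (a i : ℝ) := by
  obtain ⟨b, hb, hsum⟩ := (isGreatest_level hw fun k => (expToReal_add_one_pos v k).le).1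
  change ∑ i, b i = _ at hsum
  let a : Fin r → ℕ := fun i => ⌈b i⌉₊ - 1
  have hab : ∀ i, (a i : ℝ) ≤ b i := by
    intro i
    rcases (hb.1 i).eq_or_lt with h0 | h0
    · simp [a, ← h0]
    · have := Nat.ceil_lt_add_one (hb.1 i)
      have h1 : 1 ≤ ⌈b i⌉₊ := Nat.ceil_pos.2 h0
      simp only [a]
      push_cast [h1]
      linarith
  have hab' : ∀ i, a i ≠ 0 → (a i : ℝ) < b i := by
    intro i hi
    have := Nat.ceil_lt_add_one (hb.1 i)
    have h1 : 1 ≤ ⌈b i⌉₊ := by simp only [a] at hi; omega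
    simp only [a]
    push_cast [h1]
    linarith
  have hba : ∀ i, b i - a i ≤ 1 := by
    intro i
    have h1 := Nat.le_ceil (b i)
    have h2 : (⌈b i⌉₊ : ℝ) ≤ (a i : ℝ) + 1 := by
      have : ⌈b i⌉₊ ≤ a i + 1 := by simp only [a]; omega
      exact_mod_cast this
    linarith
  have hle : ∑ i, a i • w i ≤ v := by
    intro k
    simp only [Finset.sum_apply, Pi.smul_apply, smul_eq_mul]
    by_cases hz : ∀ i, a i * w i k = 0
    · simp [hz]
    · push Not at hz
      obtain ⟨i, hi⟩ := hz
      have hlt : ∑ i, (a i : ℝ) * w i k < ∑ i, b i * w i k := by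
        refine Finset.sum_lt_sum
          (fun i _ => mul_le_mul_of_nonneg_right (hab i) (Nat.cast_nonneg _))
          ⟨i, Finset.mem_univ i, mul_lt_mul_of_pos_right (hab' i (left_ne_zero_of_mul hi)) ?_⟩
        exact_mod_cast Nat.pos_of_ne_zero (right_ne_zero_of_mul hi)
      have := hlt.trans_le (hb.2 k)
      simp only [Pi.add_apply, expToReal, Pi.one_apply] at this
      exact Nat.lt_succ_iff.1 (by exact_mod_cast this)
  obtain ⟨u, rfl⟩ := exists_add_of_le hle
  rw [add_comm (∑ i, a i • w i) u] at *
  have hsplit : expToReal d (u + ∑ i, a i • w i) + 1 =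
      expToReal d u + 1 + expToReal d (∑ i, a i • w i) := by
    ext k
    simp only [expToReal, Pi.add_apply, Pi.one_apply]
    push_cast
    ring
  have hlow := level_add_sum_le hw (fun k => (expToReal_add_one_pos u k).le) a
  rw [← hsplit] at hlow
  have hb' : (fun i => b i - a i) ∈ feasible w (expToReal d u + 1) := by
    refine ⟨fun i => sub_nonneg.2 (hab i), fun k => ?_⟩
    have := hb.2 k
    rw [hsplit] at this
    simp only [Pi.add_apply, expToReal, Pi.one_apply, Finset.sum_apply, Pi.smul_apply, smul_eq_mul,
      Nat.cast_sum, Nat.cast_mul, sub_mul, Finset.sum_sub_distrib] at this ⊢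
    linarith
  have hup := (isGreatest_level hw fun k => (expToReal_add_one_pos u k).le).2 ⟨_, hb', rfl⟩
  simp only [Finset.sum_sub_distrib] at hup
  have heq : level w (expToReal d (u + ∑ i, a i • w i) + 1) =
      level w (expToReal d u + 1) + ∑ i, (a i : ℝ) := by linarith
  refine ⟨u, ?_, a, rfl, heq⟩
  calc level w (expToReal d u + 1) = ∑ i, (b i - a i) := by
        rw [Finset.sum_sub_distrib]; linarith
    _ ≤ ∑ _i : Fin r, (1 : ℝ) := Finset.sum_le_sum fun i _ => hba i
    _ = r := by simp

end NewtonPolyhedron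

section Counting

variable {d r : ℕ} {S : Set (Fin d → ℕ)} {w : Fin r → Fin d → ℕ}

theorem finite_level_le (h : IsGeneratedBy S w) (hw : ∀ i, w i ≠ 0)
    (hcof : (Sᶜ : Set (Fin d → ℕ)).Finite) (B : ℝ) :
    {v | level w (expToReal d v + 1) ≤ B}.Finite := by
  obtain ⟨K, hK⟩ := exists_coord_le_mul_level h hw hcof
  refine (Set.finite_Iic fun k => ⌊K k * B⌋₊).subset fun v hv k => Nat.le_floor ?_
  have h1 := hK _ (fun k => (expToReal_add_one_pos v k).le) k
  have h2 : (K k : ℝ) * level w (expToReal d v + 1) ≤ K k * B :=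
    mul_le_mul_of_nonneg_left hv (Nat.cast_nonneg _)
  simp only [Pi.add_apply, expToReal, Pi.one_apply] at h1 h2
  linarith

theorem level_expToReal_add_one_pos (hd : 1 ≤ d) (h : IsGeneratedBy S w) (hw : ∀ i, w i ≠ 0)
    (hcof : (Sᶜ : Set (Fin d → ℕ)).Finite) (v : Fin d → ℕ) :
    0 < level w (expToReal d v + 1) := by
  obtain ⟨K, hK⟩ := exists_coord_le_mul_level h hw hcof
  have h1 := hK _ (fun k => (expToReal_add_one_pos v k).le) ⟨0, hd⟩
  exact pos_of_mul_pos_right ((expToReal_add_one_pos v _).trans_le h1) (Nat.cast_nonneg _)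

/-- The number of exponent vectors of level at most `n` grows like the volume of the complement of
the Newton polyhedron. -/
theorem tendsto_card_level_le_div_pow (h : IsGeneratedBy S w) (hw : ∀ i, w i ≠ 0)
    (hcof : (Sᶜ : Set (Fin d → ℕ)).Finite) :
    Tendsto (fun n : ℕ => (Nat.card {v | level w (expToReal d v + 1) ≤ n} : ℝ) / (n : ℝ) ^ d) atTop
      (nhds (volume ({x : Fin d → ℝ | ∀ i, 0 ≤ x i} \ newtonPoly d S)).toReal) := by
  set P := newtonPoly d S with hP
  let O : Set (Fin d → ℝ) := Set.univ.pi fun _ => Set.Ioi 0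
  have hPconv : Convex ℝ P := convex_convexHull ℝ _
  have hOconv : Convex ℝ O := convex_pi fun _ _ => convex_Ioi 0
  have hOopen : IsOpen O := isOpen_set_pi Set.finite_univ fun _ _ => isOpen_Ioi
  have hbdd : Bornology.IsBounded (O \ interior P) := by
    obtain ⟨K, hK⟩ := exists_coord_le_mul_level h hw hcof
    refine (Metric.isBounded_Icc (0 : Fin d → ℝ) (fun k => (K k : ℝ))).subset ?_
    rintro x ⟨hxO, hxP⟩
    have hx : ∀ k, 0 < x k := fun k => hxO k trivial
    refine ⟨fun k => (hx k).le, fun k => (hK x (fun k => (hx k).le) k).trans ?_⟩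
    refine mul_le_of_le_one_right (Nat.cast_nonneg _) (not_lt.1 fun hlt => hxP ?_)
    simpa using (mem_interior_smul_newtonPoly_iff_lt_level h hw hx one_pos).2 hlt
  have hfront : volume (frontier (O \ interior P)) = 0 := by
    refine measure_mono_null (t := frontier O ∪ frontier P) ?_
      (measure_union_null (hOconv.addHaar_frontier _) (hPconv.addHaar_frontier _))
    rw [Set.sdiff_eq]
    refine (frontier_inter_subset _ _).trans (Set.union_subset_union Set.inter_subset_left ?_)
    rw [frontier_compl]
    exact Set.inter_subset_right.trans frontier_interior_subset
  have hvol : volume ({x : Fin d → ℝ | ∀ i, 0 ≤ x i} \ P) = volume (O \ interior P) := by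
    refine measure_congr (ae_eq_set_sdiff ?_ ?_)
    · exact (Measure.univ_pi_Ioi_ae_eq_Ici (f := (0 : Fin d → ℝ))).symm
    · exact (interior_ae_eq_of_null_frontier (hPconv.addHaar_frontier _)).symm
  rw [hvol]
  have hlim := tendsto_card_div_pow_atTop_volume (O \ interior P) hbdd
    (hOopen.measurableSet.diff isOpen_interior.measurableSet) hfront
  rw [Fintype.card_fin] at hlim
  refine hlim.congr' ?_
  filter_upwards [eventually_gt_atTop 0] with n hn
  congr 2
  have hn' : (0 : ℝ) < n := by exact_mod_cast hn
  have : NeZero n := ⟨hn.ne'⟩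
  symm
  have hmem : ∀ x : Fin d → ℝ, (∀ k, 0 < x k) →
      ((n : ℝ)⁻¹ • x ∉ interior P ↔ level w x ≤ n) := by
    intro x hx
    rw [← not_lt, ← mem_interior_smul_newtonPoly_iff_lt_level h hw hx hn',
      interior_smul₀ hn'.ne', Set.mem_smul_set_iff_inv_smul_mem₀ hn'.ne']
  refine Nat.card_eq_of_bijective (fun v => ⟨(n : ℝ)⁻¹ • (expToReal d v.1 + 1), ⟨?_, ?_⟩, ?_⟩)
    ⟨?_, ?_⟩
  · exact fun k _ => smul_pos (inv_pos.2 hn') (expToReal_add_one_pos v.1 k)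
  · exact (hmem _ (expToReal_add_one_pos v.1)).2 v.2
  · refine BoxIntegral.unitPartition.mem_smul_span_iff.2 fun k => ⟨v.1 k + 1, ?_⟩
    simp [expToReal, hn'.ne']
  · rintro ⟨u, hu⟩ ⟨v, hv⟩ huv
    have h1 := smul_right_injective (Fin d → ℝ) (inv_ne_zero hn'.ne') (congrArg Subtype.val huv)
    refine Subtype.ext (funext fun k => ?_)
    have h2 := congrFun h1 k
    simpa [expToReal] using h2
  · rintro ⟨x, ⟨hxO, hxP⟩, hxL⟩
    have hxZ := BoxIntegral.unitPartition.mem_smul_span_iff.1 hxL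
    have hv : ∀ k, ∃ m : ℕ, (m : ℝ) + 1 = n * x k := by
      intro k
      obtain ⟨z, hz⟩ := hxZ k
      have hz0 : 0 < z := by
        have : (0 : ℝ) < algebraMap ℤ ℝ z := hz ▸ mul_pos hn' (hxO k trivial)
        simpa using this
      obtain ⟨m, rfl⟩ := Int.eq_succ_of_zero_lt hz0
      exact ⟨m, by simpa using hz⟩
    choose v hv using hv
    have hx : (n : ℝ)⁻¹ • (expToReal d v + 1) = x := by
      ext k
      simp [expToReal, hv, hn'.ne']
    exact ⟨⟨v, (hmem _ (expToReal_add_one_pos v)).1 (by rwa [hx])⟩, Subtype.ext hx⟩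

theorem sub_ceil_add_one_mem_Ioc (t : ℝ) : t - ⌈t⌉ + 1 ∈ Set.Ioc (0 : ℝ) 1 :=
  ⟨by linarith [Int.ceil_lt_add_one t], by linarith [Int.le_ceil t]⟩

theorem sub_ceil_add_one_eq_iff {t c : ℝ} (hc : c ∈ Set.Ioc (0 : ℝ) 1) {n : ℕ} :
    t = c + n ↔ ⌈t⌉ = n + 1 ∧ t - ⌈t⌉ + 1 = c := by
  constructor
  · rintro rfl
    have h : ⌈c + n⌉ = (n : ℤ) + 1 := by
      have h1 : ⌈c⌉ = 1 := Int.ceil_eq_iff.2 (by simpa using hc)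
      rw [Int.ceil_add_natCast, h1, add_comm]
    refine ⟨h, ?_⟩
    rw [h]
    push_cast
    ring
  · rintro ⟨h, h'⟩
    rw [h] at h'
    push_cast at h'
    linarith

end Counting

theorem multJump_eq_zero_of_zero_mem {d r : ℕ} {S : Set (Fin d → ℕ)} {w : Fin r → Fin d → ℕ}
    (h : IsGeneratedBy S w) {i : Fin r} (hi : w i = 0) {c : ℝ} (hc : 0 < c) :
    multJump d S c = 0 := by
  have hempty : {v | expToReal d v + 1 ∈ c • newtonPoly d S \ interior (c • newtonPoly d S)} =
      ∅ := by
    refine Set.eq_empty_of_forall_notMem fun v hv => hv.2 ?_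
    refine (mem_interior_smul_newtonPoly_iff h (expToReal_add_one_pos v) hc).2
      ⟨c + 1, by linarith, Pi.single i (c + 1), ⟨Pi.single_nonneg.2 (by linarith), fun k => ?_⟩,
        by simp⟩
    simpa [Pi.single_apply, hi] using (expToReal_add_one_pos v k).le
  rw [multJump, hempty]
  simp

theorem orthant_diff_newtonPoly_eq_empty {d r : ℕ} {S : Set (Fin d → ℕ)} {w : Fin r → Fin d → ℕ}
    (h : IsGeneratedBy S w) {i : Fin r} (hi : w i = 0) :
    {x : Fin d → ℝ | ∀ i, 0 ≤ x i} \ newtonPoly d S = ∅ := by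
  rw [Set.sdiff_eq_empty]
  intro x hx
  rw [← one_smul ℝ (newtonPoly d S), mem_smul_newtonPoly_iff h one_pos]
  refine ⟨Pi.single i 1, ⟨Pi.single_nonneg.2 zero_le_one, fun k => ?_⟩, by simp⟩
  simpa [Pi.single_apply, hi] using hx k

/-- Monomial case of Theorem 4.10: for a cofinite monomial ideal `𝔞`, the Rees coefficient
`ρ_c = lim m(c+n)/n^(d-1)` exists for all `c ∈ (0,1]`, vanishes for all but finitely many
such `c`, and the sum `∑_{c ∈ (0,1]} ρ_c` equals `e(𝔞)/(d-1)! = d · vol(ℝ_{≥0}^d \ P(𝔞))`. -/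
theorem sum_of_rees_coefficients_eq_multiplicity (d : ℕ) (hd : 1 ≤ d) (k : Type*) [Field k]
    (S : Set (Fin d → ℕ)) (hS : ∀ v ∈ S, ∀ w : Fin d → ℕ, v + w ∈ S)
    (hcof : (Sᶜ : Set (Fin d → ℕ)).Finite) :
    ∃ ρ : ℝ → ℝ,
      (∀ c ∈ Set.Ioc (0 : ℝ) 1,
        Tendsto (fun n : ℕ => (multJump d S (c + n) : ℝ) / (n : ℝ) ^ (d - 1))
          atTop (nhds (ρ c))) ∧
      {c ∈ Set.Ioc (0 : ℝ) 1 | ρ c ≠ 0}.Finite ∧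
      (∑ᶠ c ∈ Set.Ioc (0 : ℝ) 1, ρ c) =
        d * (volume ({x : Fin d → ℝ | ∀ i, 0 ≤ x i} \ newtonPoly d S)).toReal := by
  obtain ⟨r, w, hgen⟩ := exists_isGeneratedBy hS
  by_cases hw : ∀ i, w i ≠ 0
  swap
  · push Not at hw
    obtain ⟨i, hi⟩ := hw
    refine ⟨0, fun c hc => ?_, by simp, ?_⟩
    · have hz : ∀ n : ℕ, multJump d S (c + n) = 0 := fun n =>
        multJump_eq_zero_of_zero_mem hgen hi (add_pos_of_pos_of_nonneg hc.1 (Nat.cast_nonneg n))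
      simp [hz]
    · rw [orthant_diff_newtonPoly_eq_empty hgen hi]
      simp
  let ψ : (Fin d → ℕ) → ℝ := fun v => level w (expToReal d v + 1)
  have hψpos : ∀ v, 0 < ψ v := level_expToReal_add_one_pos hd hgen hw hcof
  have hψfin : ∀ B, {v | ψ v ≤ B}.Finite := finite_level_le hgen hw hcof
  obtain ⟨N, p, -, hp⟩ := (hψfin r).fin_param
  have hrep : ∀ v, ∃ j, ∃ a : Fin r → ℕ,
      p j + ∑ i, a i • w i = v ∧ ψ v = ψ (p j) + ∑ i, (a i : ℝ) := by
    intro v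
    obtain ⟨u, hu, a, h1, h2⟩ := exists_level_le_add_sum_smul hw v
    obtain ⟨j, rfl⟩ : u ∈ Set.range p := hp ▸ hu
    exact ⟨j, a, h1, h2⟩
  have hsup : ∀ v (a : Fin r → ℕ), ψ v + ∑ i, (a i : ℝ) ≤ ψ (v + ∑ i, a i • w i) := by
    intro v a
    refine (level_add_sum_le hw (fun k => (expToReal_add_one_pos v k).le) a).trans_eq ?_
    congr 1
    ext k
    simp only [expToReal, Pi.add_apply, Pi.one_apply]
    push_cast
    ring
  have hmult : ∀ c ∈ Set.Ioc (0 : ℝ) 1, ∀ n : ℕ,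
      multJump d S (c + n) = Nat.card {v | ψ v = c + n} := fun c hc n =>
    multJump_eq_card_level hgen hw (add_pos_of_pos_of_nonneg hc.1 (Nat.cast_nonneg n))
  have hrat : ∀ c ∈ Set.Ioc (0 : ℝ) 1, HasRationalSeries fun n => (multJump d S (c + n) : ℝ) := by
    intro c hc
    simp only [hmult c hc]
    exact hasRationalSeries_card_level ψ w p (fun j => hψpos _) hsup hrep hc.2
  -- the representatives in `(0, 1]` of the values of `ψ` modulo `ℤ`
  let C : Finset ℝ := Finset.univ.image fun j => ψ (p j) - ⌈ψ (p j)⌉ + 1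
  have hCmem : ∀ c ∈ C, c ∈ Set.Ioc (0 : ℝ) 1 := by
    intro c hc
    obtain ⟨j, -, rfl⟩ := Finset.mem_image.1 hc
    exact sub_ceil_add_one_mem_Ioc _
  have hψC : ∀ v, ψ v - ⌈ψ v⌉ + 1 ∈ C := by
    intro v
    obtain ⟨j, a, -, hv⟩ := hrep v
    refine Finset.mem_image.2 ⟨j, Finset.mem_univ _, ?_⟩
    rw [hv, ← Nat.cast_sum, Int.ceil_add_natCast]
    push_cast
    ring
  have hzero : ∀ c ∈ Set.Ioc (0 : ℝ) 1, c ∉ C → ∀ n : ℕ, multJump d S (c + n) = 0 := by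
    intro c hc hcC n
    have hempty : {v | ψ v = c + n} = ∅ := Set.eq_empty_of_forall_notMem fun v hv =>
      hcC (((sub_ceil_add_one_eq_iff hc).1 hv).2 ▸ hψC v)
    rw [hmult c hc, hempty]
    simp
  let total : ℕ → ℝ := fun n => ∑ c ∈ C, (multJump d S (c + n) : ℝ)
  have htotal : HasRationalSeries total := by
    have := HasRationalSeries.sum C fun c hc => hrat c (hCmem c hc)
    convert! this using 1
    ext n
    simp [total]
  have hcount : ∀ n : ℕ, (Nat.card {v | ψ v ≤ (n + 1 : ℕ)} : ℝ) =
      Nat.card {v | ψ v ≤ n} + total n := by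
    intro n
    have hsplit : {v | ψ v ≤ (n + 1 : ℕ)} = {v | ψ v ≤ n} ∪ {v | ⌈ψ v⌉ = (n : ℤ) + 1} := by
      ext v
      change ψ v ≤ (n + 1 : ℕ) ↔ ψ v ≤ n ∨ ⌈ψ v⌉ = (n : ℤ) + 1
      rw [← Int.cast_natCast, ← Int.cast_natCast (R := ℝ) n, ← Int.ceil_le, ← Int.ceil_le]
      push_cast
      omega
    have hdisj : Disjoint {v | ψ v ≤ n} {v | ⌈ψ v⌉ = (n : ℤ) + 1} := by
      rw [Set.disjoint_left]
      intro v hv hv'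
      have h1 : ⌈ψ v⌉ ≤ (n : ℤ) := Int.ceil_le.2 (by simpa using hv)
      have h2 : ⌈ψ v⌉ = (n : ℤ) + 1 := hv'
      omega
    have hfin : {v | ⌈ψ v⌉ = (n : ℤ) + 1}.Finite :=
      (hψfin (n + 1 : ℕ)).subset (hsplit ▸ Set.subset_union_right)
    have hfib : {v | ⌈ψ v⌉ = (n : ℤ) + 1}.ncard = ∑ c ∈ C, multJump d S (c + n) := by
      rw [Set.ncard_eq_toFinset_card _ hfin,
        Finset.card_eq_sum_card_fiberwise (f := fun v => ψ v - ⌈ψ v⌉ + 1) (t := C)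
          fun v _ => hψC v]
      refine Finset.sum_congr rfl fun c hc => ?_
      rw [hmult c (hCmem c hc), Nat.card_coe_set_eq, ← Set.ncard_coe_finset]
      congr 1
      ext v
      simp only [Finset.coe_filter, Set.Finite.mem_toFinset]
      exact (sub_ceil_add_one_eq_iff (hCmem c hc)).symm
    rw [Nat.card_coe_set_eq, Nat.card_coe_set_eq, hsplit,
      Set.ncard_union_eq hdisj (hψfin n) hfin, hfib]
    simp [total]
  have hcount0 : (Nat.card {v | ψ v ≤ (0 : ℕ)} : ℝ) = 0 := by
    have : {v | ψ v ≤ (0 : ℕ)} = ∅ := Set.eq_empty_of_forall_notMem fun v hv =>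
      (hψpos v).not_ge (by simpa using hv)
    rw [this]
    simp
  obtain ⟨k, rfl⟩ : ∃ k, d = k + 1 := ⟨d - 1, by omega⟩
  have hlim := htotal.tendsto_of_tendsto_sum (N := fun n => (Nat.card {v | ψ v ≤ n} : ℝ))
    hcount0 hcount (tendsto_card_level_le_div_pow hgen hw hcof)
  have hρ : ∀ c, ∃ ρ : ℝ, c ∈ Set.Ioc (0 : ℝ) 1 →
      Tendsto (fun n : ℕ => (multJump (k + 1) S (c + n) : ℝ) / (n : ℝ) ^ k) atTop (nhds ρ) := by
    intro c
    by_cases hc : c ∈ Set.Ioc (0 : ℝ) 1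
    swap
    · exact ⟨0, fun h => absurd h hc⟩
    by_cases hcC : c ∈ C
    · obtain ⟨ρ, h⟩ := (hrat c hc).tendsto_of_le (fun n => Nat.cast_nonneg _)
        (fun n => Finset.single_le_sum (f := fun c => (multJump (k + 1) S (c + n) : ℝ))
          (fun c _ => Nat.cast_nonneg _) hcC) hlim
      exact ⟨ρ, fun _ => h⟩
    · exact ⟨0, fun _ => by simp [hzero c hc hcC]⟩
  choose ρ hρ using hρ
  have hρ0 : ∀ c ∈ Set.Ioc (0 : ℝ) 1, ρ c ≠ 0 → c ∈ C := by
    intro c hc hne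
    by_contra hcC
    refine hne (tendsto_nhds_unique (hρ c hc) ?_)
    simp [hzero c hc hcC]
  refine ⟨ρ, hρ, C.finite_toSet.subset fun c hc => hρ0 c hc.1 hc.2, ?_⟩
  have hsum : (∑ᶠ c ∈ Set.Ioc (0 : ℝ) 1, ρ c) = ∑ c ∈ C, ρ c := by
    refine finsum_mem_eq_sum_of_inter_support_eq _ ?_
    ext c
    exact ⟨fun h => ⟨hρ0 c h.1 h.2, h.2⟩, fun h => ⟨hCmem c h.1, h.2⟩⟩
  rw [hsum]
  push_cast
  refine tendsto_nhds_unique (tendsto_finsetSum C fun c hc => hρ c (hCmem c hc)) ?_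
  simpa only [total, Finset.sum_div] using hlim
end

section
/- Let 𝔞 be a cofinite monomial ideal in k[x₁,…,x_d]. For every positive integer n the set {v ∈ ℕ^d : v + 𝟏 ∉ int(n•P(𝔞))} is finite, and the limit as n → ∞ of #{v ∈ ℕ^d : v + 𝟏 ∉ int(n•P(𝔞))}/n^d equals vol(ℝ_{≥0}^d \ P(𝔞)), which is finite. (Monomial case of Lemma 4.9: the colengths dim_k(R/I(𝔞^n)) of the multiplier ideals grow with leading term given by the normalized Hilbert–Samuel multiplicity, here expressed as the covolume of the Newton polyhedron.) -/
open Set Filter Pointwise MeasureTheory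

open Bornology

/-- Points of the open orthant outside the interior of the Newton polyhedron. -/
def orthantDiffInterior (d : ℕ) (S : Set (Fin d → ℕ)) : Set (Fin d → ℝ) :=
  interior {x : Fin d → ℝ | ∀ i, 0 ≤ x i} \ interior (newtonPoly d S)

theorem interior_nonneg_orthant (d : ℕ) :
    interior {x : Fin d → ℝ | ∀ i, 0 ≤ x i} = {x | ∀ i, 0 < x i} := by
  have h : {x : Fin d → ℝ | ∀ i, 0 ≤ x i} = univ.pi fun _ => Ici 0 := by
    ext x; simp [Pi.le_def]
  rw [h, interior_pi_set finite_univ]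
  ext x
  simp

/-- A nonnegative vector lies in the Newton polyhedron as soon as every exponent vector
above its coordinatewise floor is in the exponent set. -/
theorem mem_newtonPoly_of_floor_le (d : ℕ) (S : Set (Fin d → ℕ)) (x : Fin d → ℝ)
    (hx : ∀ i, 0 ≤ x i) (h : ∀ v : Fin d → ℕ, (∀ i, ⌊x i⌋₊ ≤ v i) → v ∈ S) :
    x ∈ newtonPoly d S := by
  have hmem : x ∈ convexHull ℝ
      (univ.pi fun i => ({(⌊x i⌋₊ : ℝ), (⌊x i⌋₊ : ℝ) + 1} : Set ℝ)) := by
    rw [convexHull_pi]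
    intro i _
    beta_reduce
    rw [convexHull_pair, segment_eq_Icc (by linarith)]
    exact ⟨Nat.floor_le (hx i), (Nat.lt_floor_add_one _).le⟩
  refine convexHull_mono ?_ hmem
  intro y hy
  have hy' : ∀ i, ∃ m : ℕ, ⌊x i⌋₊ ≤ m ∧ (m : ℝ) = y i := by
    intro i
    rcases hy i (mem_univ i) with h | h
    · exact ⟨_, le_rfl, h.symm⟩
    · exact ⟨⌊x i⌋₊ + 1, Nat.le_succ _, by rw [h]; push_cast; rfl⟩
  choose v hv hvy using hy'
  exact ⟨v, h v hv, funext hvy⟩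

/-- For a cofinite exponent set, the complement of the Newton polyhedron in the open orthant is
contained in a box. -/
theorem exists_bound_orthantDiffInterior (d : ℕ) (S : Set (Fin d → ℕ))
    (hcof : (Sᶜ : Set (Fin d → ℕ)).Finite) :
    ∃ b : Fin d → ℕ, ∀ x ∈ orthantDiffInterior d S, ∀ i, x i ≤ b i := by
  obtain ⟨u, hu⟩ := hcof.bddAbove
  refine ⟨u + 1, fun x hx i => ?_⟩
  by_contra! hlt
  refine hx.2 (mem_interior.2 ⟨interior {x : Fin d → ℝ | ∀ i, 0 ≤ x i} ∩
    {y | ((u + 1) i : ℕ) < y i}, ?_, ?_, hx.1, hlt⟩)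
  · rintro y ⟨hy, hyi⟩
    refine mem_newtonPoly_of_floor_le d S y (interior_subset hy) fun v hv => ?_
    by_contra hvS
    have h₁ : v i ≤ u i := hu hvS i
    have h₂ : u i + 1 ≤ ⌊y i⌋₊ := Nat.le_floor (le_of_lt hyi)
    have := hv i
    omega
  · exact isOpen_interior.inter (isOpen_lt continuous_const (continuous_apply i))

theorem isBounded_orthantDiffInterior (d : ℕ) (S : Set (Fin d → ℕ))
    (hcof : (Sᶜ : Set (Fin d → ℕ)).Finite) : IsBounded (orthantDiffInterior d S) := by
  obtain ⟨b, hb⟩ := exists_bound_orthantDiffInterior d S hcof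
  exact (Metric.isBounded_Icc (0 : Fin d → ℝ) fun i => (b i : ℝ)).subset
    fun x hx => ⟨fun i => interior_subset hx.1 i, hb x hx⟩

theorem measurableSet_orthantDiffInterior (d : ℕ) (S : Set (Fin d → ℕ)) :
    MeasurableSet (orthantDiffInterior d S) :=
  isOpen_interior.measurableSet.diff isOpen_interior.measurableSet

theorem convex_nonneg_orthant (d : ℕ) : Convex ℝ {x : Fin d → ℝ | ∀ i, 0 ≤ x i} :=
  convex_Ici (0 : Fin d → ℝ)

theorem volume_frontier_orthantDiffInterior (d : ℕ) (S : Set (Fin d → ℕ)) :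
    volume (frontier (orthantDiffInterior d S)) = 0 := by
  have h₁ := (convex_nonneg_orthant d).interior.addHaar_frontier volume
  have h₂ := (convex_convexHull ℝ (expToReal d '' S)).interior.addHaar_frontier volume
  refine measure_mono_null ?_ (measure_union_null h₁ h₂)
  rw [orthantDiffInterior, sdiff_eq]
  refine (frontier_inter_subset _ _).trans ?_
  rw [frontier_compl]
  exact union_subset_union inter_subset_left inter_subset_right

theorem orthantDiffInterior_ae_eq (d : ℕ) (S : Set (Fin d → ℕ)) :
    orthantDiffInterior d S =ᵐ[volume] ({x | ∀ i, 0 ≤ x i} \ newtonPoly d S : Set _) :=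
  (interior_ae_eq_of_null_frontier ((convex_nonneg_orthant d).addHaar_frontier volume)).diff
    (interior_ae_eq_of_null_frontier ((convex_convexHull ℝ _).addHaar_frontier volume))

theorem inv_smul_mem_orthantDiffInterior_iff (d : ℕ) (S : Set (Fin d → ℕ)) {n : ℕ} (hn : 0 < n)
    (v : Fin d → ℕ) :
    (n : ℝ)⁻¹ • (expToReal d v + 1) ∈ orthantDiffInterior d S ↔
      expToReal d v + 1 ∉ interior ((n : ℝ) • newtonPoly d S) := by
  have hn' : (0 : ℝ) < n := Nat.cast_pos.2 hn
  rw [interior_smul₀ hn'.ne', mem_smul_set_iff_inv_smul_mem₀ hn'.ne']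
  refine and_iff_right ?_
  rw [interior_nonneg_orthant]
  intro i
  simp only [Pi.smul_apply, Pi.add_apply, expToReal, Pi.one_apply, smul_eq_mul]
  positivity

/-- Rescaling identifies the exponents counted by the colength with the points of the lattice
`n⁻¹ • ℤ^d` in `orthantDiffInterior d S`. -/
theorem card_colength_eq (d : ℕ) (S : Set (Fin d → ℕ)) {n : ℕ} (hn : 0 < n) :
    Nat.card {v : Fin d → ℕ | expToReal d v + 1 ∉ interior ((n : ℝ) • newtonPoly d S)} =
      Nat.card ↑(orthantDiffInterior d S ∩
        (n : ℝ)⁻¹ • (Submodule.span ℤ (range (Pi.basisFun ℝ (Fin d))) : Set (Fin d → ℝ))) := by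
  have hn' : (0 : ℝ) < n := Nat.cast_pos.2 hn
  refine Nat.card_congr (BijOn.equiv (fun v => (n : ℝ)⁻¹ • (expToReal d v + 1)) ⟨?_, ?_, ?_⟩)
  · intro v hv
    refine ⟨(inv_smul_mem_orthantDiffInterior_iff d S hn v).2 hv, smul_mem_smul_set ?_⟩
    rw [SetLike.mem_coe, Module.Basis.mem_span_iff_repr_mem]
    intro i
    exact ⟨(v i : ℤ) + 1, by simp [expToReal]⟩
  · intro v _ w _ h
    have h' := smul_right_injective (Fin d → ℝ) (inv_ne_zero hn'.ne') h
    funext i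
    simpa [expToReal] using congrFun h' i
  · rintro _ ⟨hx, y, hy, rfl⟩
    rw [SetLike.mem_coe, Module.Basis.mem_span_iff_repr_mem] at hy
    have hpos := hx.1
    rw [interior_nonneg_orthant] at hpos
    have hex : ∀ i, ∃ m : ℕ, (m : ℝ) + 1 = y i := by
      intro i
      obtain ⟨z, hz⟩ := hy i
      have hz' : (z : ℝ) = y i := by simpa using hz
      have hyi : 0 < y i := by
        have := hpos i
        simp only [Pi.smul_apply, smul_eq_mul] at this
        exact (mul_pos_iff_of_pos_left (inv_pos.2 hn')).1 this
      have hz0 : 0 < z := by rw [← hz'] at hyi; exact_mod_cast hyi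
      obtain ⟨m, hm⟩ := Int.eq_ofNat_of_zero_le (show 0 ≤ z - 1 by omega)
      refine ⟨m, ?_⟩
      rw [← hz', show z = (m : ℤ) + 1 by omega]
      push_cast
      rfl
    choose v hv using hex
    have hvy : expToReal d v + 1 = y := funext hv
    refine ⟨v, (inv_smul_mem_orthantDiffInterior_iff d S hn v).1 ?_, ?_⟩
    · rw [hvy]; exact hx
    · simp only [hvy]

/-- Monomial case of Lemma 4.9: for a cofinite monomial ideal, the colength
`dim_k(R/I(𝔞^n)) = #{v : v + 𝟏 ∉ int(n•P(𝔞))}` is finite for each `n ≥ 1`, and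
`dim_k(R/I(𝔞^n))/n^d` tends to `vol(ℝ_{≥0}^d \ P(𝔞))`, which is finite. -/
theorem colength_of_multiplier_ideals_asymptotics (d : ℕ) (hd : 1 ≤ d) (k : Type*) [Field k]
    (S : Set (Fin d → ℕ)) (hS : ∀ v ∈ S, ∀ w : Fin d → ℕ, v + w ∈ S)
    (hcof : (Sᶜ : Set (Fin d → ℕ)).Finite) :
    (∀ n : ℕ, 0 < n →
      {v : Fin d → ℕ |
        expToReal d v + 1 ∉ interior ((n : ℝ) • newtonPoly d S)}.Finite) ∧
    volume ({x : Fin d → ℝ | ∀ i, 0 ≤ x i} \ newtonPoly d S) ≠ ⊤ ∧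
    Tendsto (fun n : ℕ =>
        (Nat.card {v : Fin d → ℕ |
          expToReal d v + 1 ∉ interior ((n : ℝ) • newtonPoly d S)} : ℝ) / (n : ℝ) ^ d)
      atTop (nhds (volume ({x : Fin d → ℝ | ∀ i, 0 ≤ x i} \ newtonPoly d S)).toReal) := by
  have hbdd := isBounded_orthantDiffInterior d S hcof
  have hvol := measure_congr (orthantDiffInterior_ae_eq d S)
  refine ⟨fun n hn => ?_, ?_, ?_⟩
  · obtain ⟨b, hb⟩ := exists_bound_orthantDiffInterior d S hcof
    refine (finite_Iic (n • b)).subset fun v hv i => ?_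
    have h := hb _ ((inv_smul_mem_orthantDiffInterior_iff d S hn v).2 hv) i
    simp only [Pi.smul_apply, Pi.add_apply, expToReal, Pi.one_apply, smul_eq_mul] at h
    rw [inv_mul_le_iff₀ (Nat.cast_pos.2 hn)] at h
    have h' : v i + 1 ≤ n * b i := by exact_mod_cast h
    simp only [Pi.smul_apply, smul_eq_mul]
    omega
  · rw [← hvol]
    exact hbdd.measure_lt_top.ne
  · rw [← hvol]
    have h := tendsto_card_div_pow_atTop_volume (orthantDiffInterior d S) hbdd
      (measurableSet_orthantDiffInterior d S) (volume_frontier_orthantDiffInterior d S)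
    rw [Fintype.card_fin] at h
    refine h.congr' ?_
    filter_upwards [eventually_gt_atTop 0] with n hn
    rw [card_colength_eq d S hn]
end

section
/- Let 𝔞 be a cofinite monomial ideal in k[x₁,…,x_d] and let ℓ be any positive integer. Let φ ∈ ℚ⟦z⟧ be the formal power series whose j-th coefficient is m(j/ℓ) for j ≥ 1 and whose constant coefficient is 0. Then (1 − z^ℓ)^d · φ(z) is a polynomial; in particular φ is a rational function of z. (Monomial case of Theorem 6.1: taking ℓ to be a common denominator of all jumping numbers of 𝔞, the Poincaré series φ_Z(T) = Σ_c m(c) T^c of 𝔞 is a rational function of z = T^{1/ℓ}.) -/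
open Set Filter Pointwise MeasureTheory

/-- Nonnegativity of a vector in the lexicographic preorder given by a list of functionals. -/
def LexNonneg {E : Type*} [AddCommGroup E] [Module ℝ E] : List (E →ₗ[ℝ] ℝ) → E → Prop
  | [], _ => True
  | f :: fs, x => 0 < f x ∨ (f x = 0 ∧ LexNonneg fs x)

section LexNonneg

variable {E : Type*} [AddCommGroup E] [Module ℝ E]

theorem LexNonneg.of_smul {fs : List (E →ₗ[ℝ] ℝ)} {x : E} {ε : ℝ} (hε : 0 < ε)
    (h : LexNonneg fs (ε • x)) : LexNonneg fs x := by
  induction fs with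
  | nil => trivial
  | cons f fs ih =>
    rcases h with h | ⟨h, h'⟩
    · left
      rw [map_smul, smul_eq_mul] at h
      exact (pos_iff_pos_of_mul_pos h).1 hε
    · right
      rw [map_smul, smul_eq_mul] at h
      exact ⟨(mul_eq_zero.1 h).resolve_left hε.ne', ih h'⟩

theorem LexNonneg.eq_zero {fs : List (E →ₗ[ℝ] ℝ)} {x : E}
    (h : LexNonneg fs x) (h' : LexNonneg fs (-x)) : ∀ f ∈ fs, f x = 0 := by
  induction fs with
  | nil => simp
  | cons g fs ih =>
    simp only [LexNonneg, map_neg] at h h'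
    have hg : g x = 0 := by
      rcases h with h | ⟨h, -⟩
      · rcases h' with h' | ⟨h', -⟩ <;> linarith
      · exact h
    have h1 : LexNonneg fs x := by
      rcases h with h | h
      · exact absurd hg h.ne'
      · exact h.2
    have h2 : LexNonneg fs (-x) := by
      rcases h' with h | h
      · simp [hg] at h
      · exact h.2
    intro f hf
    rcases List.mem_cons.1 hf with rfl | hf
    · exact hg
    · exact ih h1 h2 f hf

theorem LexNonneg.head_nonneg {f : E →ₗ[ℝ] ℝ} {fs : List (E →ₗ[ℝ] ℝ)} {x : E}
    (h : LexNonneg (f :: fs) x) : 0 ≤ f x := by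
  rcases h with h | h
  · exact h.le
  · exact h.1.ge

/-- A nonempty compact set has a lexicographically minimal element. -/
theorem IsCompact.exists_lexNonneg_sub [TopologicalSpace E] {fs : List (E →ₗ[ℝ] ℝ)}
    (hfs : ∀ f ∈ fs, Continuous f) {K : Set E} (hK : IsCompact K) (hne : K.Nonempty) :
    ∃ x ∈ K, ∀ y ∈ K, LexNonneg fs (y - x) := by
  induction fs generalizing K with
  | nil => exact ⟨hne.some, hne.some_mem, fun _ _ => trivial⟩
  | cons f fs ih =>
    have hf : Continuous f := hfs f (by simp)
    obtain ⟨x₀, hx₀, hmin⟩ := hK.exists_isMinOn hne hf.continuousOn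
    obtain ⟨x, ⟨hxK, hx⟩, hlex⟩ := ih (fun g hg => hfs g (by simp [hg]))
      (hK.inter_right (isClosed_singleton.preimage hf (t := {f x₀}))) ⟨x₀, hx₀, rfl⟩
    simp only [mem_preimage, mem_singleton_iff] at hx
    refine ⟨x, hxK, fun y hy => ?_⟩
    have hle : f x₀ ≤ f y := hmin hy
    rcases hle.lt_or_eq with h | h
    · left
      rw [map_sub, hx]
      linarith
    · right
      exact ⟨by rw [map_sub, hx, h, sub_self], hlex y ⟨hy, h.symm⟩⟩

end LexNonneg

theorem exists_pos_forall_mul_le {ι : Type*} [Finite ι] {s t : ι → ℝ} (ht : 0 ≤ t)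
    (h : ∀ i, 0 < s i → 0 < t i) : ∃ ε : ℝ, 0 < ε ∧ ∀ i, ε * s i ≤ t i := by
  have key : ∀ᶠ ε : ℝ in nhdsWithin 0 (Ioi 0), ∀ i, ε * s i ≤ t i := by
    refine eventually_all.2 fun i => ?_
    by_cases hs : 0 < s i
    · have : Tendsto (fun ε : ℝ => ε * s i) (nhdsWithin 0 (Ioi 0)) (nhds (0 * s i)) :=
        ((continuous_id.mul continuous_const).tendsto 0).mono_left nhdsWithin_le_nhds
      rw [zero_mul] at this
      exact (this.eventually (gt_mem_nhds (h i hs))).mono fun _ => le_of_lt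
    · filter_upwards [self_mem_nhdsWithin] with ε hε
      exact (mul_nonpos_of_nonneg_of_nonpos (le_of_lt hε) (not_lt.1 hs)).trans (ht i)
  obtain ⟨ε, h1, h2⟩ := (key.and self_mem_nhdsWithin).exists
  exact ⟨ε, h2, h1⟩

/-- `t` is the optimal nonnegative representation of `A t`: among all such representations it
has the largest coordinate sum and is lexicographically smallest for that sum. -/
def IsOptimalRep {ι F : Type*} [Fintype ι] [AddCommGroup F] [Module ℝ F]
    (A : (ι → ℝ) →ₗ[ℝ] F) (t : ι → ℝ) : Prop :=
  0 ≤ t ∧ ∀ s, 0 ≤ s → A s = A t →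
    LexNonneg ((-∑ i, LinearMap.proj i) :: Finset.univ.toList.map LinearMap.proj) (s - t)

section IsOptimalRep

variable {ι F : Type*} [Fintype ι] [AddCommGroup F] [Module ℝ F] {A : (ι → ℝ) →ₗ[ℝ] F}

theorem IsOptimalRep.sum_le {s t : ι → ℝ} (ht : IsOptimalRep A t) (hs : 0 ≤ s)
    (h : A s = A t) : ∑ i, s i ≤ ∑ i, t i := by
  have := (ht.2 s hs h).head_nonneg
  simp only [LinearMap.neg_apply, LinearMap.sum_apply, LinearMap.proj_apply, Pi.sub_apply,
    Finset.sum_sub_distrib] at this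
  linarith

theorem IsOptimalRep.unique {s t : ι → ℝ} (hs : IsOptimalRep A s) (ht : IsOptimalRep A t)
    (h : A s = A t) : s = t := by
  have h0 := (ht.2 s hs.1 h).eq_zero (by simpa using hs.2 t ht.1 h.symm)
  funext i
  have := h0 (LinearMap.proj i) (by simp)
  simpa [sub_eq_zero] using this

theorem IsOptimalRep.of_support_le {s t : ι → ℝ} (ht : IsOptimalRep A t) (hs : 0 ≤ s)
    (h : ∀ i, 0 < s i → 0 < t i) : IsOptimalRep A s := by
  refine ⟨hs, fun s' hs' hA => ?_⟩
  obtain ⟨ε, hε, hle⟩ := exists_pos_forall_mul_le ht.1 h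
  refine LexNonneg.of_smul hε ?_
  have := ht.2 (t + ε • (s' - s)) (fun i => ?_) (by simp [hA])
  · simpa using this
  · have h1 := hle i
    have h2 := mul_nonneg hε.le (hs' i)
    simp only [Pi.zero_apply, Pi.add_apply, Pi.smul_apply, Pi.sub_apply, smul_eq_mul] at *
    linarith

theorem IsOptimalRep.eq_zero_of_map_eq_zero {t c : ι → ℝ} (ht : IsOptimalRep A t)
    (hc : ∀ i, c i ≠ 0 → 0 < t i) (hA : A c = 0) : c = 0 := by
  obtain ⟨ε, hε, hle⟩ := exists_pos_forall_mul_le (s := fun i => |c i|) ht.1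
    (fun i hi => hc i (abs_pos.1 hi))
  have hb : ∀ i, |ε * c i| ≤ t i := fun i => by rw [abs_mul, abs_of_pos hε]; exact hle i
  have h1 : IsOptimalRep A (t + ε • c) := by
    refine ht.of_support_le (fun i => ?_) fun i hi => ?_
    · have := abs_le.1 (hb i)
      simp only [Pi.zero_apply, Pi.add_apply, Pi.smul_apply, smul_eq_mul]
      linarith
    · by_contra h
      have : c i = 0 := by by_contra h'; exact h (hc i h')
      simp only [Pi.add_apply, Pi.smul_apply, smul_eq_mul, this, mul_zero, add_zero] at hi
      exact h hi
  have h2 := h1.unique ht (by simp [hA])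
  simpa [hε.ne'] using h2

theorem IsOptimalRep.card_support_le [Module.Finite ℝ F] {t : ι → ℝ} (ht : IsOptimalRep A t)
    (T : Finset ι) (hT : ∀ i ∈ T, 0 < t i) : T.card ≤ Module.finrank ℝ F := by
  classical
  let B : (T → ℝ) →ₗ[ℝ] (ι → ℝ) := Function.ExtendByZero.linearMap ℝ Subtype.val
  have hB : ∀ c (i : T), B c i = c i := fun c i =>
    Subtype.val_injective.extend_apply _ _ _
  have hB' : ∀ c i, i ∉ T → B c i = 0 := fun c i hi =>
    Function.extend_apply' _ _ _ (by rintro ⟨j, rfl⟩; exact hi j.2)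
  have hinj : Function.Injective (A ∘ₗ B) := by
    rw [← LinearMap.ker_eq_bot, LinearMap.ker_eq_bot']
    intro c hc
    have h0 : B c = 0 := ht.eq_zero_of_map_eq_zero (fun i hi => by
      by_cases h : i ∈ T
      · exact hT i h
      · exact absurd (hB' c i h) hi) hc
    funext i
    rw [← hB c i, h0]
    rfl
  simpa using LinearMap.finrank_le_finrank_of_injective hinj

theorem exists_isOptimalRep {u : F} (hK : IsCompact {t : ι → ℝ | 0 ≤ t ∧ A t = u})
    (hne : ∃ t : ι → ℝ, 0 ≤ t ∧ A t = u) : ∃ t, IsOptimalRep A t ∧ A t = u := by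
  obtain ⟨t, ⟨h0, hu⟩, h⟩ := hK.exists_lexNonneg_sub
    (fs := (-∑ i, LinearMap.proj i) :: Finset.univ.toList.map LinearMap.proj)
    (fun f _ => f.continuous_of_finiteDimensional) hne
  exact ⟨t, ⟨h0, fun s hs hA => h s ⟨hs, hA.trans hu⟩⟩, hu⟩

end IsOptimalRep

/-- The power series counting the points of `Y` by `ℓ` times their coordinate sum. -/
noncomputable def sumSeries {ι : Type*} [Fintype ι] (ℓ : ℕ) (Y : Set (ι → ℝ)) : PowerSeries ℚ :=
  PowerSeries.mk fun j => (({t ∈ Y | ℓ * ∑ i, t i = j}.ncard : ℕ) : ℚ)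

section SumSeries

variable {ι : Type*} [Fintype ι] [DecidableEq ι] {ℓ : ℕ}

/-- Restricting a coordinate to `(0, 1]` in a set stable under unit steps in that coordinate
multiplies the counting series by `1 - X ^ ℓ`. -/
theorem sumSeries_inter_le_one {Y : Set (ι → ℝ)} {i : ι}
    (hfin : ∀ j : ℕ, {t ∈ Y | ℓ * ∑ i, t i = j}.Finite) (hnonneg : ∀ t ∈ Y, 0 ≤ t)
    (hpos : ∀ t ∈ Y, 0 < t i)
    (hshift : ∀ t : ι → ℝ, 0 < t i → (t + Pi.single i 1 ∈ Y ↔ t ∈ Y)) :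
    sumSeries ℓ {t ∈ Y | t i ≤ 1} = (1 - PowerSeries.X ^ ℓ) * sumSeries ℓ Y := by
  have hsum : ∀ t : ι → ℝ, ∑ k, (t + Pi.single i 1 : ι → ℝ) k = ∑ k, t k + 1 := fun t => by
    simp [Finset.sum_add_distrib]
  ext j
  rw [sub_mul, one_mul, map_sub, PowerSeries.coeff_X_pow_mul']
  simp only [sumSeries, PowerSeries.coeff_mk]
  have hsplit : {t ∈ Y | ℓ * ∑ i, t i = j} = {t ∈ {t ∈ Y | t i ≤ 1} | ℓ * ∑ i, t i = j} ∪
      {t ∈ Y | 1 < t i ∧ ℓ * ∑ i, t i = j} := by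
    ext t
    simp only [mem_ofPred_eq, mem_union]
    rcases le_or_gt (t i) 1 with h | h
    · simp [h, h.not_gt]
    · simp [h, h.not_ge]
  have hdisj : Disjoint {t ∈ {t ∈ Y | t i ≤ 1} | ℓ * ∑ i, t i = j}
      {t ∈ Y | 1 < t i ∧ ℓ * ∑ i, t i = j} :=
    Set.disjoint_left.2 fun t h h' => absurd h.1.2 h'.2.1.not_ge
  have hcard := Set.ncard_union_eq hdisj ((hfin j).subset fun t h => ⟨h.1.1, h.2⟩)
    ((hfin j).subset fun t h => ⟨h.1, h.2.2⟩)
  rw [← hsplit] at hcard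
  rw [hcard]
  split_ifs with hj
  · have himage : {t ∈ Y | 1 < t i ∧ ℓ * ∑ i, t i = j} =
        (fun t => t + Pi.single i 1) '' {t ∈ Y | ℓ * ∑ i, t i = (j - ℓ : ℕ)} := by
      ext t
      simp only [mem_ofPred_eq, mem_image, Nat.cast_sub hj]
      constructor
      · rintro ⟨ht, hi, hs⟩
        have hadd : (t - Pi.single i 1) + Pi.single i 1 = t := sub_add_cancel _ _
        have h := hsum (t - Pi.single i 1)
        rw [hadd] at h
        refine ⟨t - Pi.single i 1, ⟨(hshift _ (by simpa using hi)).1 (by rwa [hadd]), ?_⟩, hadd⟩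
        rw [h] at hs
        linarith
      · rintro ⟨s, ⟨hs, hj'⟩, rfl⟩
        refine ⟨(hshift s (hpos s hs)).2 hs, by simpa using hpos s hs, ?_⟩
        rw [hsum]
        linarith
    rw [himage, Set.ncard_image_of_injective _ (add_left_injective _)]
    push_cast
    ring
  · have hempty : {t ∈ Y | 1 < t i ∧ ℓ * ∑ i, t i = j} = ∅ := by
      ext t
      simp only [mem_ofPred_eq, mem_empty_iff_false, iff_false, not_and]
      intro ht hi hs
      have h1 : t i ≤ ∑ k, t k :=
        Finset.single_le_sum (fun k _ => hnonneg t ht k) (Finset.mem_univ i)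
      have h2 : (j : ℝ) < ℓ := by exact_mod_cast not_le.1 hj
      have h3 : (0 : ℝ) ≤ ℓ := by positivity
      nlinarith
    simp [hempty]

theorem exists_polynomial_pow_mul_sumSeries {Y : Set (ι → ℝ)} {T : Finset ι}
    (hfin : ∀ j : ℕ, {t ∈ Y | ℓ * ∑ i, t i = j}.Finite)
    (hsupp : ∀ t ∈ Y, 0 ≤ t ∧ ∀ i, 0 < t i ↔ i ∈ T)
    (hshift : ∀ i ∈ T, ∀ t : ι → ℝ, 0 < t i → (t + Pi.single i 1 ∈ Y ↔ t ∈ Y)) :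
    ∃ q : Polynomial ℚ,
      (1 - PowerSeries.X ^ ℓ) ^ T.card * sumSeries ℓ Y = (q : PowerSeries ℚ) := by
  have hrestrict : ∀ B : Finset ι, B ⊆ T → (1 - PowerSeries.X ^ ℓ) ^ B.card * sumSeries ℓ Y =
      sumSeries ℓ {t ∈ Y | ∀ i ∈ B, t i ≤ 1} := by
    intro B
    induction B using Finset.induction_on with
    | empty => simp
    | insert i B hi ih =>
      intro hB
      have hiT : i ∈ T := hB (Finset.mem_insert_self _ _)
      rw [Finset.card_insert_of_notMem hi, pow_succ', mul_assoc,
        ih ((Finset.subset_insert _ _).trans hB), ← sumSeries_inter_le_one (i := i)]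
      · congr 1
        ext t
        simp only [mem_ofPred_eq, Finset.forall_mem_insert]
        tauto
      · exact fun j => (hfin j).subset fun t h => ⟨h.1.1, h.2⟩
      · exact fun t h => (hsupp t h.1).1
      · exact fun t h => ((hsupp t h.1).2 i).2 hiT
      · intro t ht
        refine and_congr (hshift i hiT t ht) (forall₂_congr fun k hk => ?_)
        have : k ≠ i := fun h => hi (h ▸ hk)
        simp [this]
  rw [hrestrict T subset_rfl]
  refine ⟨PowerSeries.trunc (ℓ * T.card + 1) (sumSeries ℓ {t ∈ Y | ∀ i ∈ T, t i ≤ 1}), ?_⟩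
  ext j
  rw [Polynomial.coeff_coe, PowerSeries.coeff_trunc]
  split_ifs with hj
  · rfl
  · simp only [sumSeries, PowerSeries.coeff_mk, Nat.cast_eq_zero]
    convert Set.ncard_empty (ι → ℝ)
    ext t
    simp only [mem_ofPred_eq, mem_empty_iff_false, iff_false, not_and]
    rintro ⟨ht, h1⟩ hs
    have hle : ∑ i, t i ≤ T.card := by
      rw [← Finset.sum_subset (Finset.subset_univ T) fun i _ hi =>
        le_antisymm (not_lt.1 fun h => hi (((hsupp t ht).2 i).1 h)) ((hsupp t ht).1 i)]
      simpa using Finset.sum_le_sum h1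
    have : (ℓ : ℝ) * T.card < j := by
      exact_mod_cast (by omega : ℓ * T.card < j)
    have h3 : (0 : ℝ) ≤ ℓ := by positivity
    nlinarith

end SumSeries

/-- The linear map sending coefficients `t` to `∑ i, t i • a i`. -/
noncomputable def expCombination {d : ℕ} {ι : Type*} [Fintype ι] (a : ι → Fin d → ℕ) :
    (ι → ℝ) →ₗ[ℝ] (Fin d → ℝ) :=
  Fintype.linearCombination ℝ fun i => expToReal d (a i)

section Newton

variable {d : ℕ} {ι : Type*} [Fintype ι] {a : ι → Fin d → ℕ} {S : Set (Fin d → ℕ)}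

theorem expCombination_apply (t : ι → ℝ) (k : Fin d) :
    expCombination a t k = ∑ i, t i * a i k := by
  simp [expCombination, Fintype.linearCombination_apply, expToReal]

theorem expCombination_nonneg {t : ι → ℝ} (ht : 0 ≤ t) : 0 ≤ expCombination a t := fun k => by
  rw [expCombination_apply]
  exact Finset.sum_nonneg fun i _ => mul_nonneg (ht i) (Nat.cast_nonneg _)

theorem mem_convexHull_range_expToReal {r : Fin d → ℝ} (hr : 0 ≤ r) :
    r ∈ convexHull ℝ (range (expToReal d)) := by
  have hrange : range (expToReal d) = univ.pi fun _ : Fin d => range (Nat.cast : ℕ → ℝ) := by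
    ext y
    simp only [mem_range, mem_univ_pi]
    constructor
    · rintro ⟨v, rfl⟩ i
      exact ⟨v i, rfl⟩
    · intro h
      choose v hv using h
      exact ⟨v, funext hv⟩
  rw [hrange, convexHull_pi, mem_univ_pi]
  intro i
  obtain ⟨n, hn⟩ := exists_nat_ge (r i)
  refine (convex_convexHull ℝ (range (Nat.cast : ℕ → ℝ))).ordConnected.out
    (subset_convexHull ℝ _ ⟨0, rfl⟩) (subset_convexHull ℝ _ ⟨n, rfl⟩) ⟨?_, hn⟩
  simpa using hr i

theorem newtonPoly_of_le (hS : ∀ v ∈ S, ∀ w : Fin d → ℕ, v + w ∈ S) {x y : Fin d → ℝ}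
    (hx : x ∈ newtonPoly d S) (hxy : x ≤ y) : y ∈ newtonPoly d S := by
  have hmem : x + (y - x) ∈ newtonPoly d S + convexHull ℝ (range (expToReal d)) :=
    Set.add_mem_add hx (mem_convexHull_range_expToReal (sub_nonneg.2 hxy))
  rw [newtonPoly, ← convexHull_add, add_sub_cancel] at hmem
  refine convexHull_mono ?_ hmem
  rintro _ ⟨_, ⟨v, hv, rfl⟩, _, ⟨w, rfl⟩, rfl⟩
  exact ⟨v + w, hS v hv w, by funext i; simp [expToReal]⟩

theorem mem_newtonPoly_iff (hS : ∀ v ∈ S, ∀ w : Fin d → ℕ, v + w ∈ S) (ha : ∀ i, a i ∈ S)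
    (hcover : ∀ v ∈ S, ∃ i, a i ≤ v) {y : Fin d → ℝ} :
    y ∈ newtonPoly d S ↔ ∃ t : ι → ℝ, 0 ≤ t ∧ ∑ i, t i = 1 ∧ expCombination a t ≤ y := by
  classical
  constructor
  · intro hy
    refine convexHull_min (t := {y | ∃ t : ι → ℝ, 0 ≤ t ∧ ∑ i, t i = 1 ∧
      expCombination a t ≤ y}) ?_ ?_ hy
    · rintro _ ⟨v, hv, rfl⟩
      obtain ⟨i, hi⟩ := hcover v hv
      refine ⟨Pi.single i 1, Pi.single_nonneg.2 zero_le_one, by simp, fun k => ?_⟩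
      rw [expCombination_apply, Finset.sum_eq_single i (fun j _ hj => by simp [hj]) (by simp)]
      simpa [expToReal] using hi k
    · rintro x ⟨s, hs0, hs1, hs⟩ z ⟨t, ht0, ht1, ht⟩ α β hα hβ hαβ
      refine ⟨α • s + β • t, add_nonneg (smul_nonneg hα hs0) (smul_nonneg hβ ht0), ?_, ?_⟩
      · simp [Finset.sum_add_distrib, ← Finset.mul_sum, hs1, ht1, hαβ]
      · rw [map_add, map_smul, map_smul]
        exact add_le_add (smul_le_smul_of_nonneg_left hs hα) (smul_le_smul_of_nonneg_left ht hβ)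
  · rintro ⟨t, ht0, ht1, ht⟩
    refine newtonPoly_of_le hS ?_ ht
    rw [expCombination, Fintype.linearCombination_apply]
    exact (convex_convexHull ℝ _).sum_mem (fun i _ => ht0 i) ht1
      fun i _ => subset_convexHull ℝ _ ⟨a i, ha i, rfl⟩

theorem mem_smul_newtonPoly_iff_s9 (hS : ∀ v ∈ S, ∀ w : Fin d → ℕ, v + w ∈ S)
    (ha : ∀ i, a i ∈ S) (hcover : ∀ v ∈ S, ∃ i, a i ≤ v) {c : ℝ} (hc : 0 < c)
    {y : Fin d → ℝ} : y ∈ c • newtonPoly d S ↔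
      ∃ t : ι → ℝ, 0 ≤ t ∧ ∑ i, t i = c ∧ expCombination a t ≤ y := by
  rw [mem_smul_set_iff_inv_smul_mem₀ hc.ne', mem_newtonPoly_iff hS ha hcover]
  constructor
  · rintro ⟨t, h0, h1, h⟩
    refine ⟨c • t, smul_nonneg hc.le h0, by simp [← Finset.mul_sum, h1], ?_⟩
    rw [map_smul]
    simpa [smul_smul, hc.ne'] using smul_le_smul_of_nonneg_left h hc.le
  · rintro ⟨t, h0, h1, h⟩
    refine ⟨c⁻¹ • t, smul_nonneg (inv_nonneg.2 hc.le) h0,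
      by simp [← Finset.mul_sum, h1, hc.ne'], ?_⟩
    rw [map_smul]
    exact smul_le_smul_of_nonneg_left h (inv_nonneg.2 hc.le)

theorem exists_expCombination_eq {N : ℕ} (hN : 0 < N)
    (haxis : ∀ k, ∃ i, a i = Pi.single k N) {r : Fin d → ℝ} (hr : 0 ≤ r) :
    ∃ t : ι → ℝ, 0 ≤ t ∧ expCombination a t = r := by
  classical
  choose e he using haxis
  have hN' : (N : ℝ) ≠ 0 := by exact_mod_cast hN.ne'
  refine ⟨∑ k, Pi.single (e k) (r k / N), Finset.sum_nonneg fun k _ =>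
    Pi.single_nonneg.2 (div_nonneg (hr k) (Nat.cast_nonneg _)), ?_⟩
  rw [map_sum]
  funext m
  rw [Finset.sum_apply, Finset.sum_eq_single m]
  · rw [expCombination_apply, Finset.sum_eq_single (e m) (fun j _ hj => by simp [hj]) (by simp)]
    simp [he, hN']
  · intro k _ hk
    rw [expCombination_apply, Finset.sum_eq_single (e k) (fun j _ hj => by simp [hj]) (by simp)]
    simp [he, hk.symm]
  · simp

theorem isCompact_expCombination_fiber (ha : ∀ i, a i ≠ 0) (u : Fin d → ℝ) :
    IsCompact {t : ι → ℝ | 0 ≤ t ∧ expCombination a t = u} := by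
  refine (isCompact_Icc (a := (0 : ι → ℝ)) (b := fun _ => ∑ k, u k)).of_isClosed_subset ?_ ?_
  · exact (isClosed_le continuous_const continuous_id).inter
      (isClosed_singleton.preimage (expCombination a).continuous_of_finiteDimensional)
  · rintro t ⟨h0, rfl⟩
    refine ⟨h0, fun i => ?_⟩
    obtain ⟨k, hk⟩ := Function.ne_iff.1 (ha i)
    have h1 : (1 : ℝ) ≤ a i k := by exact_mod_cast Nat.one_le_iff_ne_zero.2 hk
    calc t i ≤ t i * a i k := le_mul_of_one_le_right (h0 i) h1
      _ ≤ expCombination a t k := by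
        rw [expCombination_apply]
        exact Finset.single_le_sum (f := fun i => t i * (a i k : ℝ))
          (fun j _ => mul_nonneg (h0 j) (Nat.cast_nonneg _)) (Finset.mem_univ i)
      _ ≤ ∑ k, expCombination a t k :=
        Finset.single_le_sum (fun j _ => expCombination_nonneg h0 j) (Finset.mem_univ k)

theorem IsOptimalRep.mem_smul_newtonPoly_iff (hS : ∀ v ∈ S, ∀ w : Fin d → ℕ, v + w ∈ S)
    (ha : ∀ i, a i ∈ S) (hcover : ∀ v ∈ S, ∃ i, a i ≤ v) {N : ℕ} (hN : 0 < N)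
    (haxis : ∀ k, ∃ i, a i = Pi.single k N) {c : ℝ} (hc : 0 < c) {t : ι → ℝ}
    (ht : IsOptimalRep (expCombination a) t) :
    expCombination a t ∈ c • newtonPoly d S ↔ c ≤ ∑ i, t i := by
  rw [_root_.mem_smul_newtonPoly_iff_s9 hS ha hcover hc]
  constructor
  · rintro ⟨s, h0, rfl, h⟩
    obtain ⟨r, hr0, hr⟩ := exists_expCombination_eq hN haxis (sub_nonneg.2 h)
    have hle := ht.sum_le (add_nonneg h0 hr0) (by rw [map_add, hr, add_sub_cancel])
    have hr1 : 0 ≤ ∑ i, r i := Finset.sum_nonneg fun i _ => hr0 i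
    simp only [Pi.add_apply, Finset.sum_add_distrib] at hle
    linarith
  · intro h
    have hpos : 0 < ∑ i, t i := hc.trans_le h
    refine ⟨(c / ∑ i, t i) • t, smul_nonneg (div_nonneg hc.le hpos.le) ht.1, ?_, ?_⟩
    · simp [← Finset.mul_sum, hpos.ne']
    · rw [map_smul]
      exact smul_le_of_le_one_left (expCombination_nonneg ht.1) ((div_le_one hpos).2 h)

/-- The boundary of `c • P` inside the open orthant is the level set `c` of the optimal sum. -/
theorem IsOptimalRep.mem_boundary_iff (hS : ∀ v ∈ S, ∀ w : Fin d → ℕ, v + w ∈ S)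
    (ha : ∀ i, a i ∈ S) (hcover : ∀ v ∈ S, ∃ i, a i ≤ v) {N : ℕ} (hN : 0 < N)
    (haxis : ∀ k, ∃ i, a i = Pi.single k N) {c : ℝ} (hc : 0 < c) {t : ι → ℝ}
    (ht : IsOptimalRep (expCombination a) t) (hpos : ∀ k, 0 < expCombination a t k) :
    expCombination a t ∈ c • newtonPoly d S \ interior (c • newtonPoly d S) ↔
      ∑ i, t i = c := by
  have hscale : ∀ b : ℝ, 0 < b →
      (b • expCombination a t ∈ c • newtonPoly d S ↔ c ≤ b * ∑ i, t i) := by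
    intro b hb
    have hopt : IsOptimalRep (expCombination a) (b • t) :=
      ht.of_support_le (smul_nonneg hb.le ht.1) fun i hi => by simpa [hb] using hi
    rw [← map_smul, hopt.mem_smul_newtonPoly_iff hS ha hcover hN haxis hc]
    simp [Finset.mul_sum]
  have hinterior : expCombination a t ∈ interior (c • newtonPoly d S) ↔ c < ∑ i, t i := by
    constructor
    · intro h
      have htend : Tendsto (fun b : ℝ => b • expCombination a t) (nhdsWithin 1 (Iio 1))
          (nhds ((1 : ℝ) • expCombination a t)) :=
        ((continuous_id.smul continuous_const).tendsto 1).mono_left nhdsWithin_le_nhds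
      rw [one_smul] at htend
      obtain ⟨b, hmem, hb0, hb1⟩ := ((htend.eventually (mem_interior_iff_mem_nhds.1 h)).and
        (Ioo_mem_nhdsLT (zero_lt_one' ℝ))).exists
      have h1 := (hscale b hb0).1 hmem
      have h2 : 0 < ∑ i, t i := by
        by_contra h'
        nlinarith
      nlinarith
    · intro h
      have hsum : 0 < ∑ i, t i := hc.trans h
      have hb : (c / ∑ i, t i) • expCombination a t ∈ c • newtonPoly d S :=
        (hscale _ (div_pos hc hsum)).2 (by rw [div_mul_cancel₀ _ hsum.ne'])
      rw [_root_.mem_smul_newtonPoly_iff_s9 hS ha hcover hc] at hb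
      obtain ⟨s, hs0, hs1, hs⟩ := hb
      refine mem_interior.2 ⟨{y | ∀ k, ((c / ∑ i, t i) • expCombination a t) k < y k}, ?_, ?_, ?_⟩
      · intro y hy
        exact (_root_.mem_smul_newtonPoly_iff_s9 hS ha hcover hc).2
          ⟨s, hs0, hs1, hs.trans fun k => (hy k).le⟩
      · rw [ofPred_forall]
        exact isOpen_iInter_of_finite fun k => isOpen_lt continuous_const (continuous_apply k)
      · intro k
        exact mul_lt_of_lt_one_left (hpos k) ((div_lt_one hsum).2 h)
  rw [Set.mem_sdiff, hinterior, ht.mem_smul_newtonPoly_iff hS ha hcover hN haxis hc, not_lt]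
  exact ⟨fun h => le_antisymm h.2 h.1, fun h => ⟨h.ge, h.le⟩⟩

theorem multJump_eq_zero_of_zero_mem_s9 (hS : ∀ v ∈ S, ∀ w : Fin d → ℕ, v + w ∈ S) (h0 : 0 ∈ S)
    {c : ℝ} (hc : 0 < c) : multJump d S c = 0 := by
  have hmem : ∀ y : Fin d → ℝ, 0 ≤ y → y ∈ c • newtonPoly d S := fun y hy =>
    (mem_smul_newtonPoly_iff_s9 (a := fun _ : Unit => 0) hS (fun _ => h0)
      (fun v _ => ⟨(), fun k => Nat.zero_le (v k)⟩) hc).2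
      ⟨fun _ => c, fun _ => hc.le, by simp, fun k => by
        simpa [expCombination_apply] using hy k⟩
  have hempty : {v : Fin d → ℕ | expToReal d v + 1 ∈
      c • newtonPoly d S \ interior (c • newtonPoly d S)} = ∅ := by
    refine eq_empty_of_forall_notMem fun v hv => hv.2 (mem_interior.2
      ⟨{y | ∀ k, 0 < y k}, fun y hy => hmem y fun k => (hy k).le, ?_, fun k => ?_⟩)
    · rw [ofPred_forall]
      exact isOpen_iInter_of_finite fun k => isOpen_lt continuous_const (continuous_apply k)
    · simp only [expToReal, Pi.add_apply, Pi.one_apply]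
      positivity
  rw [multJump, hempty]
  simp

/-- A cofinite set `S` has a finite subset containing a point on each coordinate axis and, for
every element of `S`, an element below it. -/
theorem exists_finite_generators (hcof : Sᶜ.Finite) :
    ∃ (V : Set (Fin d → ℕ)) (N : ℕ), V.Finite ∧ V ⊆ S ∧ 0 < N ∧
      (∀ v ∈ S, ∃ w ∈ V, w ≤ v) ∧ ∀ k, Pi.single k N ∈ V := by
  obtain ⟨b, hb⟩ := hcof.bddAbove
  set N := ∑ k, b k + 1 with hN
  have hbN : ∀ k, b k < N := fun k => by
    have := Finset.single_le_sum (f := b) (fun j _ => Nat.zero_le _) (Finset.mem_univ k)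
    omega
  have hmem : ∀ (v : Fin d → ℕ) k, N ≤ v k → v ∈ S := fun v k hk => by
    by_contra hv
    exact absurd (hb hv k) (not_le.2 ((hbN k).trans_le hk))
  refine ⟨S ∩ Iic fun _ => N, N, (finite_Iic _).subset inter_subset_right, inter_subset_left,
    by omega, fun v hv => ?_, fun k => ⟨hmem _ k (by simp), fun j => ?_⟩⟩
  · by_cases h : ∃ k, N ≤ v k
    · obtain ⟨k, hk⟩ := h
      exact ⟨fun j => min (v j) N, ⟨hmem _ k (by simp [hk]), fun j => min_le_right _ _⟩,
        fun j => min_le_left _ _⟩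
    · push Not at h
      exact ⟨v, ⟨hv, fun j => (h j).le⟩, le_rfl⟩
  · by_cases h : j = k
    · subst h; simp
    · simp [h]

/-- Optimal representations of lattice points with positive coordinates. -/
def optimalLatticeReps (a : ι → Fin d → ℕ) : Set (ι → ℝ) :=
  {t | IsOptimalRep (expCombination a) t ∧ ∃ v, expCombination a t = expToReal d v + 1}

theorem finite_optimalLatticeReps {ℓ : ℕ} (hℓ : 0 < ℓ) (j : ℕ) :
    {t ∈ optimalLatticeReps a | ℓ * ∑ i, t i = j}.Finite := by
  have hinj : InjOn (expCombination a) {t ∈ optimalLatticeReps a | ℓ * ∑ i, t i = j} :=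
    fun s hs t ht h => hs.1.1.unique ht.1.1 h
  refine Set.Finite.of_finite_image (Set.Finite.subset
    ((finite_Iic fun k => ∑ i, j * a i k).image fun v => expToReal d v + 1) ?_) hinj
  rintro _ ⟨t, ⟨⟨hopt, v, hv⟩, hj⟩, rfl⟩
  refine ⟨v, fun k => ?_, hv.symm⟩
  have hle : ∀ i, t i ≤ j := fun i => by
    have h1 : t i ≤ ∑ i, t i :=
      Finset.single_le_sum (fun i _ => hopt.1 i) (Finset.mem_univ i)
    have h2 : (1 : ℝ) ≤ ℓ := by exact_mod_cast hℓ
    have h3 : 0 ≤ ∑ i, t i := Finset.sum_nonneg fun i _ => hopt.1 i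
    nlinarith
  have h1 : expCombination a t k ≤ ∑ i, j * (a i k : ℝ) := by
    rw [expCombination_apply]
    exact Finset.sum_le_sum fun i _ => mul_le_mul_of_nonneg_right (hle i) (Nat.cast_nonneg _)
  rw [hv] at h1
  simp only [Pi.add_apply, expToReal, Pi.one_apply] at h1
  have h2 : (v k : ℝ) ≤ ((∑ i, j * a i k : ℕ) : ℝ) := by
    push_cast
    linarith
  exact_mod_cast h2

theorem multJump_eq_ncard (hS : ∀ v ∈ S, ∀ w : Fin d → ℕ, v + w ∈ S) (h0 : 0 ∉ S)
    (ha : ∀ i, a i ∈ S) (hcover : ∀ v ∈ S, ∃ i, a i ≤ v) {N : ℕ} (hN : 0 < N)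
    (haxis : ∀ k, ∃ i, a i = Pi.single k N) {c : ℝ} (hc : 0 < c) :
    multJump d S c = {t ∈ optimalLatticeReps a | ∑ i, t i = c}.ncard := by
  have hpos : ∀ (v : Fin d → ℕ) k, 0 < (expToReal d v + 1) k := fun v k => by
    simp only [expToReal, Pi.add_apply, Pi.one_apply]
    positivity
  have hinj : Function.Injective fun v : Fin d → ℕ => expToReal d v + 1 := fun v w h => by
    funext k
    have := congrFun h k
    simpa [expToReal] using this
  have himage : (fun v => expToReal d v + 1) '' {v : Fin d → ℕ | expToReal d v + 1 ∈
      c • newtonPoly d S \ interior (c • newtonPoly d S)} =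
      expCombination a '' {t ∈ optimalLatticeReps a | ∑ i, t i = c} := by
    ext y
    constructor
    · rintro ⟨v, hv, rfl⟩
      obtain ⟨t, ht, htv⟩ := exists_isOptimalRep
        (isCompact_expCombination_fiber (fun i h => h0 (h ▸ ha i)) (expToReal d v + 1))
        (exists_expCombination_eq hN haxis fun k => (hpos v k).le)
      refine ⟨t, ⟨⟨ht, v, htv⟩, ?_⟩, htv⟩
      rw [← ht.mem_boundary_iff hS ha hcover hN haxis hc (by rw [htv]; exact hpos v), htv]
      exact hv
    · rintro ⟨t, ⟨⟨ht, v, htv⟩, hsum⟩, rfl⟩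
      refine ⟨v, ?_, htv.symm⟩
      have := (ht.mem_boundary_iff hS ha hcover hN haxis hc (by rw [htv]; exact hpos v)).2 hsum
      rwa [htv] at this
  rw [multJump, Nat.card_coe_set_eq, ← Set.ncard_image_of_injective _ hinj, himage]
  exact Set.InjOn.ncard_image fun s hs t ht h => hs.1.1.unique ht.1.1 h

theorem expCombination_pos_of_support {s t : ι → ℝ} (ht : 0 ≤ t)
    (h : ∀ i, 0 < s i → 0 < t i) {k : Fin d} (hk : 0 < expCombination a s k) :
    0 < expCombination a t k := by
  obtain ⟨ε, hε, hle⟩ := exists_pos_forall_mul_le ht h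
  refine (mul_pos hε hk).trans_le ?_
  have := expCombination_nonneg (a := a) (t := t - ε • s) (fun i => sub_nonneg.2 (hle i)) k
  simpa using this

/-- Being an optimal lattice representation is invariant under unit steps along the support. -/
theorem add_single_mem_optimalLatticeReps_iff [DecidableEq ι] {t : ι → ℝ} {i : ι}
    (hi : 0 < t i) : t + Pi.single i 1 ∈ optimalLatticeReps a ↔ t ∈ optimalLatticeReps a := by
  have hsupp : ∀ k, 0 < (t + Pi.single i 1 : ι → ℝ) k ↔ 0 < t k := fun k => by
    by_cases h : k = i
    · subst h
      simp only [Pi.add_apply, Pi.single_eq_same, hi, iff_true]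
      positivity
    · simp [h]
  have hmap : ∀ k, expCombination a (t + Pi.single i 1) k = expCombination a t k + a i k :=
    fun k => by
      simp [expCombination_apply, add_mul, Finset.sum_add_distrib, Pi.single_apply]
  constructor
  · rintro ⟨hopt, v, hv⟩
    have h0 : 0 ≤ t := fun k => by
      by_cases h : k = i
      · exact h ▸ hi.le
      · simpa [h] using hopt.1 k
    have hle : ∀ k, a i k ≤ v k := fun k => by
      have hpos : 0 < expCombination a t k :=
        expCombination_pos_of_support h0 (fun k => (hsupp k).1) (by
          rw [hv]
          simp only [expToReal, Pi.add_apply, Pi.one_apply]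
          positivity)
      have h1 := hmap k
      rw [hv] at h1
      simp only [expToReal, Pi.add_apply, Pi.one_apply] at h1
      have h2 : (a i k : ℝ) < (v k + 1 : ℕ) := by
        push_cast
        linarith
      exact Nat.lt_succ_iff.1 (by exact_mod_cast h2)
    refine ⟨hopt.of_support_le h0 fun k => (hsupp k).2, fun k => v k - a i k, funext fun k => ?_⟩
    have h1 := hmap k
    rw [hv] at h1
    simp only [expToReal, Pi.add_apply, Pi.one_apply, Nat.cast_sub (hle k)] at h1 ⊢
    linarith
  · rintro ⟨hopt, v, hv⟩
    refine ⟨hopt.of_support_le (add_nonneg hopt.1 (Pi.single_nonneg.2 zero_le_one))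
      fun k => (hsupp k).1, v + a i, funext fun k => ?_⟩
    rw [hmap, hv]
    simp only [expToReal, Pi.add_apply, Pi.one_apply, Nat.cast_add]
    ring

theorem exists_polynomial_sumSeries_support {ℓ : ℕ} (hℓ : 0 < ℓ) (T : Finset ι) :
    ∃ q : Polynomial ℚ, (1 - PowerSeries.X ^ ℓ) ^ d *
      sumSeries ℓ {t ∈ optimalLatticeReps a | ∀ i, 0 < t i ↔ i ∈ T} = (q : PowerSeries ℚ) := by
  classical
  rcases {t ∈ optimalLatticeReps a | ∀ i, 0 < t i ↔ i ∈ T}.eq_empty_or_nonempty with he | hne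
  · refine ⟨0, ?_⟩
    have : sumSeries ℓ (∅ : Set (ι → ℝ)) = 0 := by
      ext j
      simp [sumSeries]
    rw [he, this, mul_zero, Polynomial.coe_zero]
  obtain ⟨t₀, ⟨ht₀, -⟩, hT₀⟩ := hne
  have hcard : T.card ≤ d := by
    simpa using ht₀.card_support_le T fun i hi => (hT₀ i).2 hi
  obtain ⟨q, hq⟩ := exists_polynomial_pow_mul_sumSeries (ℓ := ℓ) (T := T)
    (Y := {t ∈ optimalLatticeReps a | ∀ i, 0 < t i ↔ i ∈ T})
    (fun j => (finite_optimalLatticeReps hℓ j).subset fun t h => ⟨h.1.1, h.2⟩)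
    (fun t h => ⟨h.1.1.1, h.2⟩) (fun i _ t hi => by
      refine and_congr (add_single_mem_optimalLatticeReps_iff hi) (forall_congr' fun k => ?_)
      by_cases h : k = i
      · subst h
        simp [hi, add_pos hi]
      · simp [h])
  refine ⟨(1 - Polynomial.X ^ ℓ) ^ (d - T.card) * q, ?_⟩
  push_cast
  rw [← hq, ← mul_assoc, ← pow_add, Nat.sub_add_cancel hcard]

theorem exists_polynomial_sumSeries_optimalLatticeReps {ℓ : ℕ} (hℓ : 0 < ℓ) :
    ∃ q : Polynomial ℚ, (1 - PowerSeries.X ^ ℓ) ^ d *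
      sumSeries ℓ (optimalLatticeReps a) = (q : PowerSeries ℚ) := by
  classical
  have hsum : sumSeries ℓ (optimalLatticeReps a) =
      ∑ T : Finset ι, sumSeries ℓ {t ∈ optimalLatticeReps a | ∀ i, 0 < t i ↔ i ∈ T} := by
    ext j
    simp only [map_sum, sumSeries, PowerSeries.coeff_mk]
    rw [← Nat.cast_sum, Set.ncard_eq_toFinset_card _ (finite_optimalLatticeReps hℓ j),
      Finset.card_eq_sum_card_fiberwise
        (f := fun t : ι → ℝ => Finset.univ.filter fun i => 0 < t i) (t := Finset.univ)
        fun _ _ => Finset.mem_coe.2 (Finset.mem_univ _)]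
    congr 1
    refine Finset.sum_congr rfl fun T _ => ?_
    rw [← Set.ncard_coe_finset]
    congr 1
    ext t
    simp only [Finset.coe_filter, Finite.mem_toFinset, mem_ofPred_eq, Finset.ext_iff,
      Finset.mem_filter, Finset.mem_univ, true_and]
    tauto
  choose q hq using fun T : Finset ι => exists_polynomial_sumSeries_support (a := a) hℓ T
  refine ⟨∑ T, q T, ?_⟩
  rw [hsum, Finset.mul_sum, Finset.sum_congr rfl fun T _ => hq T]
  exact (map_sum (Polynomial.coeToPowerSeries.ringHom (R := ℚ)) q Finset.univ).symm

end Newton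

/-- Monomial case of Theorem 6.1: for a cofinite monomial ideal `𝔞` and any positive
integer `ℓ`, the power series `φ(z) = ∑_{j ≥ 1} m(j/ℓ) z^j` becomes a polynomial after
multiplication by `(1 - z^ℓ)^d`; in particular the Poincaré series of `𝔞` is a rational
function of `z = T^{1/ℓ}`. -/
theorem poincare_series_rational (d : ℕ) (hd : 1 ≤ d) (k : Type*) [Field k]
    (S : Set (Fin d → ℕ)) (hS : ∀ v ∈ S, ∀ w : Fin d → ℕ, v + w ∈ S)
    (hcof : (Sᶜ : Set (Fin d → ℕ)).Finite)
    (ℓ : ℕ) (hℓ : 0 < ℓ)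
    (φ : PowerSeries ℚ)
    (hφ : φ = PowerSeries.mk fun j =>
      if j = 0 then 0 else (multJump d S ((j : ℝ) / (ℓ : ℝ)) : ℚ)) :
    ∃ q : Polynomial ℚ, (1 - PowerSeries.X ^ ℓ) ^ d * φ = (q : PowerSeries ℚ) := by
  by_cases h0 : (0 : Fin d → ℕ) ∈ S
  · refine ⟨0, ?_⟩
    have : φ = 0 := by
      rw [hφ]
      ext j
      rw [PowerSeries.coeff_mk, map_zero]
      split_ifs with hj
      · rfl
      · rw [multJump_eq_zero_of_zero_mem_s9 hS h0 (by positivity), Nat.cast_zero]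
    rw [this, mul_zero, Polynomial.coe_zero]
  obtain ⟨V, N, hVfin, hVS, hN, hcover, haxis⟩ := exists_finite_generators hcof
  have : Fintype V := hVfin.fintype
  have hsum : φ = sumSeries ℓ (optimalLatticeReps (Subtype.val : V → Fin d → ℕ)) := by
    rw [hφ]
    ext j
    rw [sumSeries, PowerSeries.coeff_mk, PowerSeries.coeff_mk]
    have hℓ' : (ℓ : ℝ) ≠ 0 := by exact_mod_cast hℓ.ne'
    split_ifs with hj
    · subst hj
      rw [eq_comm, Nat.cast_eq_zero]
      convert Set.ncard_empty (V → ℝ)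
      refine eq_empty_of_forall_notMem fun t ⟨⟨ht, v, hv⟩, h⟩ => ?_
      have hzero : ∑ i, t i = 0 := by simpa [hℓ'] using h
      have ht0 : t = 0 := funext fun i =>
        (Finset.sum_eq_zero_iff_of_nonneg fun i _ => ht.1 i).1 hzero i (Finset.mem_univ i)
      have hk := congrFun hv ⟨0, hd⟩
      rw [ht0, map_zero] at hk
      simp only [expToReal, Pi.add_apply, Pi.one_apply, Pi.zero_apply] at hk
      have : (0 : ℝ) ≤ v ⟨0, hd⟩ := Nat.cast_nonneg _
      linarith
    · rw [multJump_eq_ncard (a := (Subtype.val : V → Fin d → ℕ)) hS h0 (fun i => hVS i.2)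
        (fun v hv => let ⟨w, hw, hle⟩ := hcover v hv; ⟨⟨w, hw⟩, hle⟩) hN
        (fun k => ⟨⟨_, haxis k⟩, rfl⟩) (by positivity)]
      simp only [eq_div_iff hℓ', mul_comm]
  rw [hsum]
  exact exists_polynomial_sumSeries_optimalLatticeReps hℓ
end

section
/- Let 𝔞 be a cofinite monomial ideal in k[x₁,…,x_d]. Then there exists a positive integer ℓ such that for every real number c > 0 with m(c) > 0 one has ℓ·c ∈ ℤ. In particular, every jumping number of 𝔞 is rational, and the set of jumping numbers of 𝔞 is a discrete subset of ℝ. (Monomial case of the candidate jumping number structure from Section 2.1.1.) -/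
open Set Filter Pointwise MeasureTheory

/-- A real solution of a system of equations `∑ i, a i * s i = 1` with natural coefficients `s`
yields a rational one, by applying a `ℚ`-linear retraction `ℝ → ℚ`. -/
theorem exists_rat_solution_of_real_solution {d : ℕ} (a : Fin d → ℝ) :
    ∃ q : Fin d → ℚ, ∀ s : Fin d → ℕ, ∑ i, a i * (s i : ℝ) = 1 → ∑ i, q i * (s i : ℚ) = 1 := by
  obtain ⟨φ, hφ⟩ := LinearMap.exists_leftInverse_of_injective (Algebra.linearMap ℚ ℝ)
    (LinearMap.ker_eq_bot.2 (algebraMap ℚ ℝ).injective)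
  have hφ1 : φ 1 = 1 := by simpa using LinearMap.congr_fun hφ 1
  refine ⟨fun i => φ (a i), fun s hs => ?_⟩
  rw [← hφ1, ← hs, map_sum]
  refine Finset.sum_congr rfl fun i _ => ?_
  rw [mul_comm (a i), ← nsmul_eq_mul, map_nsmul, nsmul_eq_mul, mul_comm]

/-- A vector of rationals has a common denominator. -/
theorem exists_common_denominator {d : ℕ} (q : Fin d → ℚ) :
    ∃ m : ℕ, 0 < m ∧ ∀ w : Fin d → ℕ, ∃ z : ℤ, (m : ℚ) * ∑ i, q i * (w i : ℚ) = z := by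
  refine ⟨∏ i, (q i).den, Finset.prod_pos fun i _ => (q i).pos, fun w => ?_⟩
  have h : ∀ i, ∃ z : ℤ, ((∏ j, (q j).den : ℕ) : ℚ) * q i = z := fun i => by
    obtain ⟨e, he⟩ := Finset.dvd_prod_of_mem (fun j => (q j).den) (Finset.mem_univ i)
    refine ⟨e * (q i).num, ?_⟩
    rw [he]
    push_cast
    rw [mul_right_comm, mul_comm ((q i).den : ℚ), Rat.mul_den_eq_num, mul_comm]
  choose z hz using h
  refine ⟨∑ i, z i * w i, ?_⟩
  push_cast
  rw [Finset.mul_sum]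
  refine Finset.sum_congr rfl fun i _ => ?_
  rw [← hz i]
  push_cast
  ring

/-- If `p` lies in the convex hull of `A`, the linear form `a` is at least `1` on `A` with
`a p = 1`, then any linear form equal to `1` on the face `{x ∈ A | a x = 1}` is `1` at `p`. -/
theorem linear_eq_one_of_mem_convexHull_face {E : Type*} [AddCommGroup E] [Module ℝ E]
    {A : Set E} {p : E} (hp : p ∈ convexHull ℝ A) (a b : E →ₗ[ℝ] ℝ)
    (ha : ∀ x ∈ A, 1 ≤ a x) (hap : a p = 1) (hb : ∀ x ∈ A, a x = 1 → b x = 1) : b p = 1 := by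
  have hsub : convexHull ℝ A ⊆ {x | 1 ≤ a x ∧ (a x = 1 → b x = 1)} := by
    refine convexHull_min (fun x hx => ⟨ha x hx, hb x hx⟩) ?_
    rintro x ⟨hx, hx'⟩ y ⟨hy, hy'⟩ s t hs ht hst
    simp only [mem_ofPred_eq, map_add, map_smul, smul_eq_mul]
    refine ⟨by nlinarith, fun h => ?_⟩
    have h1 : s * (a x - 1) = 0 :=
      le_antisymm (by nlinarith [mul_nonneg ht (sub_nonneg.2 hy)])
        (mul_nonneg hs (sub_nonneg.2 hx))
    have h2 : t * (a y - 1) = 0 := by linear_combination h - hst - h1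
    have h3 : s * (b x - 1) = 0 := by
      rcases mul_eq_zero.1 h1 with h | h
      · simp [h]
      · simp [hx' (by linarith)]
    have h4 : t * (b y - 1) = 0 := by
      rcases mul_eq_zero.1 h2 with h | h
      · simp [h]
      · simp [hy' (by linarith)]
    linear_combination h3 + h4 + hst
  exact (hsub hp).2 hap

/-- A cofinite exponent set contains a multiple of each coordinate vector. -/
theorem exists_single_mem_of_cofinite {d : ℕ} {S : Set (Fin d → ℕ)} (hcof : Sᶜ.Finite)
    (i : Fin d) : ∃ n : ℕ, Pi.single i n ∈ S := by
  by_contra! h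
  exact Set.infinite_of_injective_forall_mem (Pi.single_injective (M := fun _ => ℕ) i)
    (fun n => show Pi.single i n ∈ Sᶜ from h n) hcof

/-- The Newton polyhedron of a nonempty monomial ideal is full-dimensional. -/
theorem interior_newtonPoly_nonempty {d : ℕ} {S : Set (Fin d → ℕ)} (hne : S.Nonempty)
    (hS : ∀ v ∈ S, ∀ w : Fin d → ℕ, v + w ∈ S) : (interior (newtonPoly d S)).Nonempty := by
  obtain ⟨s, hs⟩ := hne
  rw [newtonPoly, interior_convexHull_nonempty_iff_affineSpan_eq_top,
    ← AffineSubspace.direction_eq_top_iff_of_nonempty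
      ⟨_, subset_affineSpan ℝ _ (mem_image_of_mem _ hs)⟩,
    direction_affineSpan, eq_top_iff, ← (Pi.basisFun ℝ (Fin d)).span_eq, Submodule.span_le]
  rintro _ ⟨i, rfl⟩
  have h := vsub_mem_vectorSpan ℝ (mem_image_of_mem (expToReal d) (hS s hs (Pi.single i 1)))
    (mem_image_of_mem (expToReal d) hs)
  rw [SetLike.mem_coe]
  convert h using 1
  ext j
  by_cases hj : j = i
  · subst hj; simp [expToReal]
  · simp [expToReal, hj]

/-- A point with positive coordinates outside the interior of the Newton polyhedron lies on a
hyperplane `∑ i, a i * x i = 1` with nonnegative coefficients such that the polyhedron is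
contained in `∑ i, a i * x i ≥ 1`. -/
theorem exists_supporting_form {d : ℕ} {S : Set (Fin d → ℕ)} (hne : S.Nonempty)
    (hS : ∀ v ∈ S, ∀ w : Fin d → ℕ, v + w ∈ S) {p : Fin d → ℝ}
    (hpi : p ∉ interior (newtonPoly d S)) (hpos : ∀ i, 0 < p i) :
    ∃ a : Fin d → ℝ, (∀ i, 0 ≤ a i) ∧ (∀ s ∈ S, 1 ≤ ∑ i, a i * (s i : ℝ)) ∧
      ∑ i, a i * p i = 1 := by
  have hconv : Convex ℝ (newtonPoly d S) := convex_convexHull ℝ _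
  have hint := interior_newtonPoly_nonempty hne hS
  obtain ⟨f, hf⟩ := geometric_hahn_banach_open_point hconv.interior isOpen_interior hpi
  have hle : ∀ y ∈ newtonPoly d S, f y ≤ f p := fun y hy => by
    have hy' : y ∈ closure (interior (newtonPoly d S)) := by
      rw [hconv.closure_interior_eq_closure_of_nonempty_interior hint]
      exact subset_closure hy
    exact closure_minimal (fun x hx => (hf x hx).le)
      (isClosed_le f.continuous continuous_const) hy'
  set b : Fin d → ℝ := fun i => -f (Pi.single i 1) with hb
  have hfb : ∀ x : Fin d → ℝ, ∑ i, b i * x i = -f x := fun x => by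
    have : f x = ∑ i, x i * f (Pi.single i 1) := by
      conv_lhs => rw [pi_eq_sum_univ' x]
      simp [map_sum]
    rw [this, ← Finset.sum_neg_distrib]
    exact Finset.sum_congr rfl fun i _ => by simp only [hb]; ring
  have hmin : ∀ s ∈ S, ∑ i, b i * p i ≤ ∑ i, b i * (s i : ℝ) := fun s hs => by
    have h := hle _ (subset_convexHull ℝ _ (mem_image_of_mem (expToReal d) hs))
    have h' := hfb (expToReal d s)
    simp only [expToReal] at h h'
    rw [hfb, h']
    linarith
  have hb0 : ∀ i, 0 ≤ b i := fun i => by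
    by_contra! hi
    obtain ⟨s, hs⟩ := hne
    obtain ⟨N, hN⟩ := exists_nat_gt ((∑ j, b j * (s j : ℝ) - ∑ j, b j * p j) / -b i)
    rw [div_lt_iff₀ (neg_pos.2 hi)] at hN
    have h := hmin _ (hS s hs (Pi.single i N))
    have h' : ∑ j, b j * (((s + Pi.single i N : Fin d → ℕ) j : ℕ) : ℝ) =
        ∑ j, b j * (s j : ℝ) + b i * N := by
      simp only [Pi.add_apply, Nat.cast_add, mul_add, Finset.sum_add_distrib, Pi.single_apply]
      simp
    linarith
  have hβ : 0 < ∑ i, b i * p i := by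
    refine lt_of_le_of_ne (Finset.sum_nonneg fun i _ => mul_nonneg (hb0 i) (hpos i).le)
      fun h0 => ?_
    have hbz : ∀ i, b i = 0 := fun i => by
      have h := (Finset.sum_eq_zero_iff_of_nonneg
        fun i _ => mul_nonneg (hb0 i) (hpos i).le).1 h0.symm i (Finset.mem_univ i)
      exact (mul_eq_zero.1 h).resolve_right (hpos i).ne'
    obtain ⟨x, hx⟩ := hint
    have h1 := hfb x
    have h2 := hfb p
    simp only [hbz, zero_mul, Finset.sum_const_zero] at h1 h2
    linarith [hf x hx]
  have hscale : ∀ x : Fin d → ℝ, ∑ i, b i / (∑ j, b j * p j) * x i =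
      (∑ i, b i * x i) / ∑ j, b j * p j := fun x => by
    rw [Finset.sum_div]
    exact Finset.sum_congr rfl fun i _ => by ring
  refine ⟨fun i => b i / ∑ j, b j * p j, fun i => div_nonneg (hb0 i) hβ.le, fun s hs => ?_, ?_⟩
  · rw [hscale fun i => (s i : ℝ), one_le_div hβ]
    exact hmin s hs
  · rw [hscale, div_self hβ.ne']

/-- All jumping numbers of a cofinite monomial ideal have a common denominator. -/
theorem exists_common_denominator_multJump {d : ℕ} (hd : 1 ≤ d) {S : Set (Fin d → ℕ)}
    (hS : ∀ v ∈ S, ∀ w : Fin d → ℕ, v + w ∈ S) (hcof : Sᶜ.Finite) :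
    ∃ ℓ : ℕ, 0 < ℓ ∧ ∀ c : ℝ, 0 < c → 0 < multJump d S c → ∃ z : ℤ, (ℓ : ℝ) * c = z := by
  choose n hn using exists_single_mem_of_cofinite hcof
  have hne : S.Nonempty := ⟨_, hn ⟨0, hd⟩⟩
  have hT : ∀ T : Finset (Fin d → ℕ), ∃ m : ℕ, 0 < m ∧ ∃ q : Fin d → ℚ,
      ((∃ a : Fin d → ℝ, ∀ s ∈ T, ∑ i, a i * (s i : ℝ) = 1) →
        ∀ s ∈ T, ∑ i, q i * (s i : ℚ) = 1) ∧
      ∀ w : Fin d → ℕ, ∃ z : ℤ, (m : ℚ) * ∑ i, q i * (w i : ℚ) = z := fun T => by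
    by_cases h : ∃ a : Fin d → ℝ, ∀ s ∈ T, ∑ i, a i * (s i : ℝ) = 1
    · obtain ⟨a, ha⟩ := h
      obtain ⟨q, hq⟩ := exists_rat_solution_of_real_solution a
      obtain ⟨m, hm, hmq⟩ := exists_common_denominator q
      exact ⟨m, hm, q, fun _ s hs => hq s (ha s hs), hmq⟩
    · exact ⟨1, one_pos, 0, fun h' => absurd h' h, fun w => ⟨0, by simp⟩⟩
  choose m hm q hq hmq using hT
  refine ⟨∏ T ∈ (Finset.Iic n).powerset, m T, Finset.prod_pos fun T _ => hm T,
    fun c hc hmult => ?_⟩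
  obtain ⟨v, hv⟩ : {v : Fin d → ℕ | expToReal d v + 1 ∈
      c • newtonPoly d S \ interior (c • newtonPoly d S)}.Nonempty :=
    Set.nonempty_coe_sort.1 (Nat.card_pos_iff.1 hmult).1
  obtain ⟨⟨p, hp, hpv⟩, hvi⟩ := hv
  have hpv' : ∀ i, c * p i = (v i : ℝ) + 1 := fun i => by
    simpa [expToReal] using congrFun hpv i
  have hpi : p ∉ interior (newtonPoly d S) := fun h =>
    hvi (by rw [interior_smul₀ hc.ne', ← hpv]; exact smul_mem_smul_set h)
  have hpos : ∀ i, 0 < p i := fun i =>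
    pos_of_mul_pos_right (by rw [hpv' i]; positivity) hc.le
  obtain ⟨a, ha0, ha1, hap⟩ := exists_supporting_form hne hS hpi hpos
  classical
  let T : Finset (Fin d → ℕ) :=
    {s ∈ Finset.Iic n | s ∈ S ∧ ∑ i, a i * (s i : ℝ) = 1}
  have hTmem : ∀ s ∈ S, ∑ i, a i * (s i : ℝ) = 1 → s ∈ T := fun s hs hs1 => by
    refine Finset.mem_filter.2 ⟨Finset.mem_Iic.2 fun i => ?_, hs, hs1⟩
    have h1 : 1 ≤ a i * n i := by
      have h := ha1 _ (hn i)
      simpa [Pi.single_apply] using h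
    have h2 : a i * s i ≤ 1 := hs1 ▸ Finset.single_le_sum (f := fun i => a i * (s i : ℝ))
      (fun j _ => mul_nonneg (ha0 j) (Nat.cast_nonneg _)) (Finset.mem_univ i)
    have hai : 0 < a i := lt_of_le_of_ne (ha0 i) fun h => by
      rw [← h] at h1
      norm_num at h1
    exact_mod_cast le_of_mul_le_mul_left (h2.trans h1) hai
  have hqT := hq T ⟨a, fun s hs => (Finset.mem_filter.1 hs).2.2⟩
  let form (b : Fin d → ℝ) : (Fin d → ℝ) →ₗ[ℝ] ℝ := ∑ i, b i • LinearMap.proj i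
  have hform : ∀ b x, form b x = ∑ i, b i * x i := fun b x => by
    simp [form, LinearMap.sum_apply]
  have hqp : ∑ i, (q T i : ℝ) * p i = 1 := by
    rw [← hform]
    refine linear_eq_one_of_mem_convexHull_face hp (form a) _ ?_ (by rw [hform, hap]) ?_
    · rintro _ ⟨s, hs, rfl⟩
      rw [hform]
      exact ha1 s hs
    · rintro _ ⟨s, hs, rfl⟩ hs1
      rw [hform] at hs1 ⊢
      have h := hqT s (hTmem s hs hs1)
      simp only [expToReal]
      exact_mod_cast h
  have hcq : c = ∑ i, (q T i : ℝ) * ((v i : ℝ) + 1) := by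
    calc c = c * ∑ i, (q T i : ℝ) * p i := by rw [hqp, mul_one]
      _ = _ := by
        rw [Finset.mul_sum]
        exact Finset.sum_congr rfl fun i _ => by rw [← hpv' i]; ring
  obtain ⟨z, hz⟩ := hmq T (fun i => v i + 1)
  have hz' : (m T : ℝ) * c = z := by
    rw [hcq]
    exact_mod_cast congrArg (Rat.cast : ℚ → ℝ) hz
  obtain ⟨e, he⟩ := Finset.dvd_prod_of_mem m
    (Finset.mem_powerset.2 (Finset.filter_subset _ _) : T ∈ (Finset.Iic n).powerset)
  refine ⟨e * z, ?_⟩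
  rw [he]
  push_cast
  rw [← hz']
  ring

/-- Monomial case of the candidate jumping number structure (Section 2.1.1): all jumping
numbers of a cofinite monomial ideal have a common denominator `ℓ`; in particular they are
rational and form a discrete subset of `ℝ`. -/
theorem jumping_numbers_common_denominator (d : ℕ) (hd : 1 ≤ d) (k : Type*) [Field k]
    (S : Set (Fin d → ℕ)) (hS : ∀ v ∈ S, ∀ w : Fin d → ℕ, v + w ∈ S)
    (hcof : (Sᶜ : Set (Fin d → ℕ)).Finite) :
    (∃ ℓ : ℕ, 0 < ℓ ∧ ∀ c : ℝ, 0 < c → 0 < multJump d S c → ∃ z : ℤ, (ℓ : ℝ) * c = z) ∧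
    (∀ c : ℝ, 0 < c → 0 < multJump d S c → ∃ q : ℚ, c = (q : ℝ)) ∧
    DiscreteTopology ↥{c : ℝ | 0 < c ∧ 0 < multJump d S c} := by
  obtain ⟨ℓ, hℓ, h⟩ := exists_common_denominator_multJump hd hS hcof
  have hℓ' : (0 : ℝ) < ℓ := Nat.cast_pos.2 hℓ
  refine ⟨⟨ℓ, hℓ, h⟩, fun c hc hm => ?_, ?_⟩
  · obtain ⟨z, hz⟩ := h c hc hm
    refine ⟨z / ℓ, ?_⟩
    push_cast
    rw [← hz, mul_div_cancel_left₀ _ hℓ'.ne']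
  · refine DiscreteTopology.of_forall_le_dist (r := (ℓ : ℝ)⁻¹) (inv_pos.2 hℓ') ?_
    rintro ⟨x, hx, hmx⟩ ⟨y, hy, hmy⟩ hxy
    obtain ⟨z, hz⟩ := h x hx hmx
    obtain ⟨w, hw⟩ := h y hy hmy
    have hzw : z ≠ w := fun hzw => hxy <| Subtype.ext <|
      mul_left_cancel₀ hℓ'.ne' (hz.trans (by rw [hw, hzw]))
    have h1 : (1 : ℝ) ≤ |(z : ℝ) - w| := by
      exact_mod_cast Int.one_le_abs (sub_ne_zero.2 hzw)
    rw [← hz, ← hw, ← mul_sub, abs_mul, abs_of_pos hℓ'] at h1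
    rw [Subtype.dist_eq, Real.dist_eq]
    exact (inv_le_iff_one_le_mul₀' hℓ').2 h1
end

section
/- Let ℓ ≥ 1 and let Q ⊆ ℝ^ℓ be a compact convex set with nonempty interior. Let (c_n) be a sequence of positive real numbers with c_n → ∞, and let (t_n) be an arbitrary sequence of vectors in ℝ^ℓ. Then #((t_n + c_n • Q) ∩ ℤ^ℓ)/c_n^ℓ → vol(Q) as n → ∞, where t_n + c_n • Q = {t_n + c_n·q : q ∈ Q}. (The generalized lattice-point counting formula stated and used in the proof of Theorem 5.2: the number of lattice points in a possibly non-integrally translated dilate of a convex body is asymptotic to the volume of the dilate.) -/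
open Set Filter Pointwise MeasureTheory

/-- The coordinatewise floor map pushes Lebesgue measure forward to the counting measure. -/
theorem map_floor_volume_eq_count {ι : Type*} [Fintype ι] :
    (volume : Measure (ι → ℝ)).map (fun x i => ⌊x i⌋) = (Measure.count : Measure (ι → ℤ)) := by
  have hmeas : Measurable (fun (x : ι → ℝ) i => ⌊x i⌋) := by fun_prop
  refine Measure.ext_of_singleton fun v => ?_
  have hpre : (fun (x : ι → ℝ) i => ⌊x i⌋) ⁻¹' {v} =
      Set.pi univ fun i => Ico (v i : ℝ) (v i + 1) := by
    ext x
    simp [funext_iff, Int.floor_eq_iff]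
  rw [Measure.map_apply hmeas (measurableSet_singleton v), hpre, Real.volume_pi_Ico]
  simp

theorem volume_floor_affine_preimage {ι : Type*} [Fintype ι] (S : Set (ι → ℤ))
    (t : ι → ℝ) {c : ℝ} (hc : 0 < c) :
    (volume {y : ι → ℝ | (fun i => ⌊(t + c • y) i⌋) ∈ S}).toReal =
      (Nat.card S : ℝ) / c ^ Fintype.card ι := by
  have hmeas : Measurable (fun (x : ι → ℝ) i => ⌊x i⌋) := by fun_prop
  have hset : {y : ι → ℝ | (fun i => ⌊(t + c • y) i⌋) ∈ S} =
      (c • ·) ⁻¹' ((t + ·) ⁻¹' ((fun (x : ι → ℝ) i => ⌊x i⌋) ⁻¹' S)) := rfl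
  rw [hset, Measure.addHaar_preimage_smul _ hc.ne', measure_preimage_add,
    ← Measure.map_apply hmeas S.to_countable.measurableSet, map_floor_volume_eq_count,
    Measure.count_apply S.to_countable.measurableSet, ENNReal.toReal_mul,
    ENNReal.toReal_ofReal (abs_nonneg _), abs_of_pos (by positivity),
    Module.finrank_fintype_fun_eq_card, div_eq_inv_mul]
  congr 1
  rw [Nat.card_coe_set_eq, Set.ncard]
  cases S.encard <;> simp

theorem dist_floor_affine_le {ι : Type*} [Fintype ι] (t y : ι → ℝ) {c : ℝ} (hc : 0 < c) :
    dist (c⁻¹ • ((fun i => (⌊(t + c • y) i⌋ : ℝ)) - t)) y ≤ c⁻¹ := by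
  refine (dist_pi_le_iff (by positivity)).2 fun i => ?_
  have h : (c⁻¹ • ((fun i => (⌊(t + c • y) i⌋ : ℝ)) - t)) i - y i =
      c⁻¹ * -Int.fract (t i + c * y i) := by
    simp only [Pi.smul_apply, Pi.sub_apply, Pi.add_apply, smul_eq_mul, Int.fract]
    field_simp
    ring
  rw [Real.dist_eq, h, abs_mul, abs_neg, Int.abs_fract, abs_of_pos (inv_pos.2 hc)]
  exact mul_le_of_le_one_right (by positivity) (Int.fract_lt_one _).le

/-- The generalized lattice-point counting formula used in the proof of Theorem 5.2:
for a compact convex body `Q ⊆ ℝ^ℓ` with nonempty interior, dilation factors `c_n → ∞`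
and arbitrary translation vectors `t_n`, the number of lattice points in `t_n + c_n • Q`
is asymptotic to `c_n^ℓ · vol(Q)`. -/
theorem lattice_points_in_translated_dilates (ℓ : ℕ) (hℓ : 1 ≤ ℓ)
    (Q : Set (Fin ℓ → ℝ)) (hQcpt : IsCompact Q) (hQconv : Convex ℝ Q)
    (hQint : (interior Q).Nonempty)
    (c : ℕ → ℝ) (hcpos : ∀ n, 0 < c n) (hctop : Tendsto c atTop atTop)
    (t : ℕ → (Fin ℓ → ℝ)) :
    Tendsto (fun n : ℕ =>
        (Nat.card {v : Fin ℓ → ℤ |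
            ∃ q ∈ Q, (fun i => (v i : ℝ)) = t n + c n • q} : ℝ) / c n ^ ℓ)
      atTop (nhds (volume Q).toReal) := by
  let S : ℕ → Set (Fin ℓ → ℤ) := fun n =>
    {v | ∃ q ∈ Q, (fun i => (v i : ℝ)) = t n + c n • q}
  let A : ℕ → Set (Fin ℓ → ℝ) := fun n => {y | (fun i => ⌊(t n + c n • y) i⌋) ∈ S n}
  set g : ℕ → (Fin ℓ → ℝ) → (Fin ℓ → ℝ) := fun n y =>
    (c n)⁻¹ • ((fun i => (⌊(t n + c n • y) i⌋ : ℝ)) - t n) with hg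
  have hmem : ∀ n y, y ∈ A n ↔ g n y ∈ Q := by
    intro n y
    have hc := (hcpos n).ne'
    constructor
    · rintro ⟨q, hq, h⟩
      simpa only [hg, h, add_sub_cancel_left, inv_smul_smul₀ hc] using hq
    · intro h
      exact ⟨g n y, h, by simp only [hg, smul_inv_smul₀ hc, add_sub_cancel]⟩
  have hdist : ∀ n y, dist (g n y) y ≤ (c n)⁻¹ := fun n y => dist_floor_affine_le _ _ (hcpos n)
  have hinv : Tendsto (fun n => (c n)⁻¹) atTop (nhds 0) := tendsto_inv_atTop_zero.comp hctop
  have hlim : ∀ y, Tendsto (fun n => g n y) atTop (nhds y) := fun y =>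
    tendsto_iff_dist_tendsto_zero.2 (squeeze_zero (fun _ => dist_nonneg) (fun n => hdist n y) hinv)
  have hAmeas : ∀ n, MeasurableSet (A n) := fun n =>
    (by fun_prop : Measurable fun (y : Fin ℓ → ℝ) i => ⌊(t n + c n • y) i⌋)
      (S n).to_countable.measurableSet
  have hbound : ∀ᶠ n in atTop, A n ⊆ Metric.cthickening 1 Q := by
    filter_upwards [hinv.eventually_le_const one_pos] with n hn y hy
    refine Metric.mem_cthickening_of_dist_le y (g n y) 1 Q ((hmem n y).1 hy) ?_
    rw [dist_comm]
    exact (hdist n y).trans hn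
  have hae : ∀ᵐ y, ∀ᶠ n in atTop, (y ∈ A n ↔ y ∈ Q) := by
    filter_upwards [measure_eq_zero_iff_ae_notMem.1 (hQconv.addHaar_frontier volume)] with y hy
    by_cases hyQ : y ∈ Q
    · have hyint : y ∈ interior Q := by
        by_contra h
        exact hy ⟨subset_closure hyQ, h⟩
      filter_upwards [hlim y (mem_interior_iff_mem_nhds.1 hyint)] with n hn
      exact iff_of_true ((hmem n y).2 hn) hyQ
    · filter_upwards [hlim y (hQcpt.isClosed.isOpen_compl.mem_nhds hyQ)] with n hn
      exact iff_of_false (fun h => hn ((hmem n y).1 h)) hyQ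
  have hvol : Tendsto (fun n => volume (A n)) atTop (nhds (volume Q)) :=
    tendsto_measure_of_ae_tendsto_indicator atTop hQcpt.measurableSet hAmeas
      Metric.isClosed_cthickening.measurableSet hQcpt.cthickening.measure_lt_top.ne hbound hae
  refine ((ENNReal.tendsto_toReal hQcpt.measure_lt_top.ne).comp hvol).congr fun n => ?_
  have h := volume_floor_affine_preimage (S n) (t n) (hcpos n)
  rw [Fintype.card_fin] at h
  exact h
end

section
/- Let 𝔞 be a cofinite monomial ideal in k[x₁,…,x_d]. Then for every real number c > 0 the set {v ∈ ℕ^d : v + 𝟏 ∈ c•P(𝔞) \ int(c•P(𝔞))} is finite; that is, the multiplicity m(c) is a well-defined natural number. (Finiteness of the multiplicity of any candidate jumping number of a cofinite monomial ideal, implicit in Theorem 5.2 and Lemma 5.3.) -/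
open Set Filter Pointwise MeasureTheory

/-- A cofinite exponent set contains all sufficiently high powers of each variable. -/
lemma exists_single_mem_of_finite_compl {d : ℕ} {S : Set (Fin d → ℕ)}
    (hcof : (Sᶜ : Set (Fin d → ℕ)).Finite) :
    ∃ N : ℕ, 0 < N ∧ ∀ (i : Fin d) (n : ℕ), N ≤ n → Pi.single i n ∈ S := by
  obtain ⟨b, hb⟩ := hcof.bddAbove
  refine ⟨∑ j, b j + 1, Nat.succ_pos _, fun i n hn => ?_⟩
  by_contra h
  have h₁ : n ≤ b i := by simpa using hb h i
  have h₂ : b i ≤ ∑ j, b j :=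
    Finset.single_le_sum (fun j _ => Nat.zero_le (b j)) (Finset.mem_univ i)
  omega

lemma expToReal_single {d : ℕ} (i : Fin d) (n : ℕ) :
    expToReal d (Pi.single i n) = Pi.single i (n : ℝ) := by
  ext j
  by_cases h : j = i
  · subst h; simp [expToReal]
  · simp [expToReal, h]

/-- If all `n • eᵢ` with `n ≥ N` are exponents, the Newton polyhedron contains the ray of
points `t • eᵢ` with `t ≥ N` real. -/
lemma single_mem_newtonPoly {d : ℕ} {S : Set (Fin d → ℕ)} {N : ℕ} {i : Fin d}
    (hN : ∀ n : ℕ, N ≤ n → Pi.single i n ∈ S) {t : ℝ} (ht : (N : ℝ) ≤ t) :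
    Pi.single i t ∈ newtonPoly d S := by
  have hvertex (n : ℕ) (hn : N ≤ n) : Pi.single i (n : ℝ) ∈ newtonPoly d S :=
    subset_convexHull ℝ _ ⟨_, hN n hn, expToReal_single i n⟩
  have hfloor : N ≤ ⌊t⌋₊ := Nat.le_floor ht
  have h₁ : (⌊t⌋₊ : ℝ) ≤ t := Nat.floor_le ((Nat.cast_nonneg N).trans ht)
  have h₂ : t < ⌊t⌋₊ + 1 := Nat.lt_floor_add_one t
  have hcomb := convex_convexHull ℝ (expToReal d '' S) (hvertex _ hfloor)
    (hvertex (⌊t⌋₊ + 1) (by omega)) (a := ⌊t⌋₊ + 1 - t) (b := t - ⌊t⌋₊)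
    (by linarith) (by linarith) (by ring)
  rw [← Pi.single_smul', ← Pi.single_smul', ← Pi.single_add] at hcomb
  have ht' : (⌊t⌋₊ + 1 - t) • (⌊t⌋₊ : ℝ) + (t - ⌊t⌋₊) • ((⌊t⌋₊ + 1 : ℕ) : ℝ) = t := by
    push_cast [smul_eq_mul]
    ring
  rwa [ht'] at hcomb

/-- The Newton polyhedron of a cofinite monomial ideal contains every point of the nonnegative
orthant with large enough coordinate sum. -/
lemma mem_newtonPoly_of_le_sum {d : ℕ} {S : Set (Fin d → ℕ)} {N : ℕ} (hpos : 0 < N)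
    (hN : ∀ (i : Fin d) (n : ℕ), N ≤ n → Pi.single i n ∈ S) {x : Fin d → ℝ}
    (hx : ∀ i, 0 ≤ x i) (hsum : (N : ℝ) ≤ ∑ i, x i) : x ∈ newtonPoly d S := by
  set s := ∑ i, x i with hs
  have hs₀ : 0 < s := (Nat.cast_pos.mpr hpos).trans_le hsum
  have hcomb := (convex_convexHull ℝ (expToReal d '' S)).sum_mem (t := Finset.univ)
    (w := fun i => x i / s) (z := fun i => Pi.single i s)
    (fun i _ => div_nonneg (hx i) hs₀.le)
    (by rw [← Finset.sum_div, ← hs, div_self hs₀.ne'])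
    (fun i _ => single_mem_newtonPoly (hN i) hsum)
  have hxeq : ∑ i, (x i / s) • (Pi.single i s : Fin d → ℝ) = x := by
    ext j
    simp [Finset.sum_apply, Pi.single_apply, hs₀.ne']
  rwa [hxeq] at hcomb

/-- Positive points with coordinate sum larger than `c * N` are interior to `c • P`. -/
lemma mem_interior_smul_newtonPoly {d : ℕ} {S : Set (Fin d → ℕ)} {N : ℕ} (hpos : 0 < N)
    (hN : ∀ (i : Fin d) (n : ℕ), N ≤ n → Pi.single i n ∈ S) {c : ℝ} (hc : 0 < c)
    {x : Fin d → ℝ} (hx : ∀ i, 0 < x i) (hsum : c * N < ∑ i, x i) :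
    x ∈ interior (c • newtonPoly d S) := by
  have hopen : IsOpen {y : Fin d → ℝ | (∀ i, 0 < y i) ∧ c * N < ∑ i, y i} := by
    rw [ofPred_and, ofPred_forall]
    exact (isOpen_iInter_of_finite fun i => isOpen_lt continuous_const (continuous_apply i)).inter
      (isOpen_lt continuous_const (by fun_prop))
  refine interior_maximal ?_ hopen ⟨hx, hsum⟩
  rintro y ⟨hy, hysum⟩
  rw [mem_smul_set_iff_inv_smul_mem₀ hc.ne']
  refine mem_newtonPoly_of_le_sum hpos hN
    (fun i => mul_nonneg (inv_nonneg.mpr hc.le) (hy i).le) ?_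
  simp only [Pi.smul_apply, smul_eq_mul, ← Finset.mul_sum]
  rw [inv_mul_eq_div, le_div_iff₀ hc]
  linarith

/-- Finiteness of the multiplicity (implicit in Theorem 5.2 and Lemma 5.3): for a cofinite
monomial ideal and any `c > 0`, only finitely many `v ∈ ℕ^d` have `v + 𝟏` on the boundary
part `c•P(𝔞) \ int(c•P(𝔞))` of the dilated Newton polyhedron. -/
theorem multiplicity_finite (d : ℕ) (hd : 1 ≤ d) (k : Type*) [Field k]
    (S : Set (Fin d → ℕ)) (hS : ∀ v ∈ S, ∀ w : Fin d → ℕ, v + w ∈ S)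
    (hcof : (Sᶜ : Set (Fin d → ℕ)).Finite)
    (c : ℝ) (hc : 0 < c) :
    {v : Fin d → ℕ |
      expToReal d v + 1 ∈ c • newtonPoly d S \ interior (c • newtonPoly d S)}.Finite := by
  obtain ⟨N, hpos, hN⟩ := exists_single_mem_of_finite_compl hcof
  refine (finite_Iic (fun _ : Fin d => ⌊c * N⌋₊)).subset ?_
  rintro v ⟨-, hv⟩ i
  have hcoord (j : Fin d) : 0 < (expToReal d v + 1) j := by
    simp only [expToReal, Pi.add_apply, Pi.one_apply]
    positivity
  have hsum : ∑ j, (expToReal d v + 1) j ≤ c * N :=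
    not_lt.mp fun h => hv (mem_interior_smul_newtonPoly hpos hN hc hcoord h)
  have hle : (expToReal d v + 1) i ≤ ∑ j, (expToReal d v + 1) j :=
    Finset.single_le_sum (fun j _ => (hcoord j).le) (Finset.mem_univ i)
  simp only [expToReal, Pi.add_apply, Pi.one_apply] at hle hsum
  exact Nat.le_floor (by linarith)
end
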